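/- arXiv:1706.06331 — 7 statements merged into one kernel-verified Lean document; each statement's English description precedes it below -/
import Mathlib

section
/- Let d ≥ 1 and for each η ∈ ℤ^d let a⁰_η, a¹_η : ℝ^d → ℝ and R_η : ℝ^d × (0,1] → ℝ. Assume there is C > 0 such that |a⁰_η(x) − a⁰_η(x+h)| ≤ C|h| and |a¹_η(x) − a¹_η(x+h)| ≤ C|h| for all η ∈ ℤ^d and x,h ∈ ℝ^d, that for each fixed x and η the value a¹_η(x) is finite, and that sup_{x,η} |R_η(x,ε)| ≤ Cε² for all ε ∈ (0,1]. Suppose the symmetry relation a⁰_η(x) + ε a¹_η(x) + R_η(x,ε) = a⁰_{−η}(x+εη) + ε a¹_{−η}(x+εη) + R_{−η}(x+εη, ε) holds for all η ∈ ℤ^d, x ∈ ℝ^d and ε ∈ (0,1]. Then a⁰_η(x) = a⁰_{−η}(x) for every η ∈ ℤ^d and x ∈ ℝ^d; in other words, the leading symbol ξ ↦ Σ_η a⁰_η(x) e^{−i η·ξ} is an even function of ξ. -/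
open scoped RealInnerProductSpace Classical
noncomputable section

/-- `ℝ^d` as a Euclidean space. -/
abbrev Ed (d : ℕ) := EuclideanSpace ℝ (Fin d)

/-- The lattice vector `η ∈ ℤ^d` regarded as a vector of `ℝ^d`. -/
def zv {d : ℕ} (η : Fin d → ℤ) : Ed d :=
  (EuclideanSpace.equiv (Fin d) ℝ).symm (fun i => (η i : ℝ))

/-!
At fixed `x` and `η`, let `ε → 0⁺` in the reversibility relation. The base point `x + εη` on the
right moves with `ε`, so the limits have to be taken jointly in the point and in `ε`; the Lipschitz
bounds and the uniformity of the remainder bound in the point provide exactly this.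
-/

section LeadingTerm

open Filter Function Topology

/-- `f₀` is the leading term of the family `f · ε` as `ε → 0⁺`. The limit is taken jointly in the
point and in `ε`, so that it may be evaluated along points that move with `ε`. -/
def HasLeadingTerm {X F : Type*} [TopologicalSpace X] [TopologicalSpace F]
    (f : X → ℝ → F) (f₀ : X → F) : Prop :=
  ∀ x, Tendsto (uncurry f) (𝓝 x ×ˢ 𝓝[>] 0) (𝓝 (f₀ x))

theorem lipschitzWith_of_norm_sub_add_le {E F : Type*} [SeminormedAddCommGroup E]
    [SeminormedAddCommGroup F] {f : E → F} {C : ℝ}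
    (hf : ∀ x h, ‖f x - f (x + h)‖ ≤ C * ‖h‖) : LipschitzWith C.toNNReal f :=
  LipschitzWith.of_dist_le' fun x y => by
    simpa only [add_sub_cancel, dist_eq_norm, norm_sub_rev x y] using hf x (y - x)

theorem tendsto_uncurry_zero_of_norm_le {α β F : Type*} [SeminormedAddCommGroup F]
    {l : Filter α} {m : Filter β} {R : α → β → F} {φ : β → ℝ}
    (hR : ∀ᶠ t in m, ∀ y, ‖R y t‖ ≤ φ t) (hφ : Tendsto φ m (𝓝 0)) :
    Tendsto (uncurry R) (l ×ˢ m) (𝓝 0) :=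
  squeeze_zero_norm' ((tendsto_snd.eventually hR).mono fun p hp => hp p.1) (hφ.comp tendsto_snd)

theorem hasLeadingTerm_zero_of_norm_le_mul_sq {X F : Type*} [TopologicalSpace X]
    [SeminormedAddCommGroup F] {R : X → ℝ → F} {C : ℝ}
    (hR : ∀ y, ∀ ε ∈ Set.Ioc (0 : ℝ) 1, ‖R y ε‖ ≤ C * ε ^ 2) : HasLeadingTerm R 0 := by
  have hbound : ∀ᶠ ε in 𝓝[>] (0 : ℝ), ∀ y, ‖R y ε‖ ≤ C * ε ^ 2 := by
    filter_upwards [Ioc_mem_nhdsGT zero_lt_one] with ε hε y using hR y ε hε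
  have hφ : Tendsto (fun ε : ℝ => C * ε ^ 2) (𝓝[>] 0) (𝓝 0) :=
    (Continuous.tendsto' (by fun_prop) 0 0 (by simp)).mono_left nhdsWithin_le_nhds
  exact fun _ => tendsto_uncurry_zero_of_norm_le hbound hφ

theorem hasLeadingTerm_add_smul_add {X F : Type*} [TopologicalSpace X] [TopologicalSpace F]
    [AddCommMonoid F] [Module ℝ F] [ContinuousAdd F] [ContinuousSMul ℝ F]
    {f g : X → F} {R : X → ℝ → F} (hf : Continuous f) (hg : Continuous g)
    (hR : HasLeadingTerm R 0) : HasLeadingTerm (fun y ε => f y + ε • g y + R y ε) f := by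
  intro x
  have hε : Tendsto Prod.snd (𝓝 x ×ˢ 𝓝[>] (0 : ℝ)) (𝓝 0) :=
    tendsto_snd.mono_right nhdsWithin_le_nhds
  have hsum := (((hf.tendsto x).comp tendsto_fst).add
    (hε.smul ((hg.tendsto x).comp tendsto_fst))).add (hR x)
  simpa only [zero_smul, add_zero, Pi.zero_apply, comp_def, uncurry_def] using hsum

section Translation

variable {E F : Type*} [TopologicalSpace E] [AddCommMonoid E] [Module ℝ E] [ContinuousAdd E]
  [ContinuousSMul ℝ E] [TopologicalSpace F]

theorem HasLeadingTerm.tendsto_add_smul {f : E → ℝ → F} {f₀ : E → F}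
    (hf : HasLeadingTerm f f₀) (x v : E) :
    Tendsto (fun ε : ℝ => f (x + ε • v) ε) (𝓝[>] 0) (𝓝 (f₀ x)) := by
  have hpath : Tendsto (fun ε : ℝ => x + ε • v) (𝓝[>] 0) (𝓝 x) :=
    (Continuous.tendsto' (by fun_prop) 0 x (by simp)).mono_left nhdsWithin_le_nhds
  exact (hf x).comp (hpath.prodMk tendsto_id)

theorem HasLeadingTerm.eq_of_eventually_eq_translate [T2Space F] {f g : E → ℝ → F} {f₀ g₀ : E → F}
    (hf : HasLeadingTerm f f₀) (hg : HasLeadingTerm g g₀) {x v : E}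
    (hfg : ∀ᶠ ε in 𝓝[>] (0 : ℝ), f x ε = g (x + ε • v) ε) : f₀ x = g₀ x := by
  have hlim : Tendsto (f x) (𝓝[>] 0) (𝓝 (f₀ x)) := by
    simpa only [smul_zero, add_zero] using hf.tendsto_add_smul x 0
  exact tendsto_nhds_unique_of_eventuallyEq hlim (hg.tendsto_add_smul x v) hfg

theorem stmt0_general [T2Space F] {I : Type*} [Neg I] (v : I → E) {a : I → E → ℝ → F}
    {a0 : I → E → F} (ha : ∀ η, HasLeadingTerm (a η) (a0 η))
    (hsym : ∀ η x, ∀ᶠ ε in 𝓝[>] (0 : ℝ), a η x ε = a (-η) (x + ε • v η) ε) (η : I) (x : E) :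
    a0 η x = a0 (-η) x :=
  (ha η).eq_of_eventually_eq_translate (ha (-η)) (hsym η x)

end Translation

end LeadingTerm

/-- Lemma 1.2 (b): the leading coefficients `a⁰_η` are even in `η`, as a consequence of the
symmetry (reversibility) relation for the full coefficients
`a_η(x,ε) = a⁰_η(x) + ε a¹_η(x) + R_η(x,ε)` together with the uniform Lipschitz bounds on
`a⁰, a¹` and the `O(ε²)` bound on the remainder. -/
theorem stmt0 (d : ℕ) (hd : 1 ≤ d)
    (a0 a1 : (Fin d → ℤ) → Ed d → ℝ)
    (R : (Fin d → ℤ) → Ed d → ℝ → ℝ)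
    (C : ℝ) (hC : 0 < C)
    (hlip0 : ∀ (η : Fin d → ℤ) (x h : Ed d), |a0 η x - a0 η (x + h)| ≤ C * ‖h‖)
    (hlip1 : ∀ (η : Fin d → ℤ) (x h : Ed d), |a1 η x - a1 η (x + h)| ≤ C * ‖h‖)
    (hR : ∀ (η : Fin d → ℤ) (x : Ed d), ∀ ε ∈ Set.Ioc (0:ℝ) 1, |R η x ε| ≤ C * ε ^ 2)
    (hsym : ∀ (η : Fin d → ℤ) (x : Ed d), ∀ ε ∈ Set.Ioc (0:ℝ) 1,
      a0 η x + ε * a1 η x + R η x ε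
        = a0 (-η) (x + ε • zv η) + ε * a1 (-η) (x + ε • zv η) + R (-η) (x + ε • zv η) ε) :
    ∀ (η : Fin d → ℤ) (x : Ed d), a0 η x = a0 (-η) x :=
  stmt0_general zv
    (fun η => hasLeadingTerm_add_smul_add (lipschitzWith_of_norm_sub_add_le (hlip0 η)).continuous
      (lipschitzWith_of_norm_sub_add_le (hlip1 η)).continuous
      (hasLeadingTerm_zero_of_norm_le_mul_sq (hR η)))
    (fun η x => Filter.eventually_of_mem (Ioc_mem_nhdsGT zero_lt_one) (hsym η x))
end
end

section
/- Fix x ∈ ℝ^d and let ã : ℤ^d → ℝ (write ã_η := ã(η)). Assume: Σ_{η∈ℤ^d} ã_η = 0; ã_η ≤ 0 for η ≠ 0; ã_η = ã_{−η} for all η; for every c > 0 there is C > 0 with Σ_{η∈ℤ^d} e^{2c|η|} ã_η² ≤ C; and the real span of {η ∈ ℤ^d : ã_η < 0} is all of ℝ^d. Then the symmetric matrix B ∈ ℝ^{d×d} with entries B_{νμ} = −(1/2) Σ_{η∈ℤ^d} ã_η η_ν η_μ is well defined and positive definite, and the function t₀(ξ) := Σ_{η∈ℤ^d} ã_η cos(η·ξ)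 satisfies: there exist C′, δ > 0 such that |t₀(ξ) − ⟨ξ, Bξ⟩| ≤ C′|ξ|⁴ for all |ξ| ≤ δ. -/
open scoped RealInnerProductSpace Classical
noncomputable section

/-!
Since `∑ᵢ aᵢ = 0`, the symbol is `∑ᵢ aᵢ (cos ⟨vᵢ, ξ⟩ - 1)`, and `|cos t - (1 - t² / 2)| ≤ t⁴ / 24`
for every real `t`. So the quadratic part is `∑ᵢ (-aᵢ / 2) ⟨vᵢ, ξ⟩²`, with an error of at most
`|ξ|⁴ / 24` times the fourth moment `∑ᵢ |aᵢ| |vᵢ|⁴`. All terms of the quadratic part are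
nonnegative, and they vanish together only if `ξ` is orthogonal to the vectors `vᵢ` with `aᵢ < 0`,
which span. On a lattice the fourth moment is finite because an exponential weight on `aᵢ²` beats
every polynomial, by Cauchy–Schwarz.
-/

lemma sq_sub_pow_four_div_three_le_sin_sq (s : ℝ) : s ^ 2 - s ^ 4 / 3 ≤ Real.sin s ^ 2 := by
  wlog hs : 0 ≤ s generalizing s
  · simpa [Even.neg_pow (by decide : Even 4)] using this (-s) (by linarith)
  have hsin := Real.sin_ge_sub_cube hs
  rcases le_total (s ^ 2) 6 with h | h
  · have hcube : 0 ≤ s - s ^ 3 / 6 := by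
      rw [show s - s ^ 3 / 6 = s * (6 - s ^ 2) / 6 by ring]
      exact div_nonneg (mul_nonneg hs (sub_nonneg.2 h)) (by norm_num)
    calc s ^ 2 - s ^ 4 / 3 ≤ (s - s ^ 3 / 6) ^ 2 := by nlinarith [sq_nonneg (s ^ 3)]
      _ ≤ Real.sin s ^ 2 := by gcongr
  · nlinarith [sq_nonneg (Real.sin s)]

lemma abs_cos_sub_one_sub_sq_div_two_le (t : ℝ) :
    |Real.cos t - (1 - t ^ 2 / 2)| ≤ t ^ 4 / 24 := by
  rw [abs_of_nonneg (sub_nonneg.2 Real.one_sub_sq_div_two_le_cos)]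
  have hhalf : Real.cos t = 1 - 2 * Real.sin (t / 2) ^ 2 := by
    rw [Real.sin_sq_eq_half_sub, mul_div_cancel₀ t two_ne_zero]
    ring
  linarith [sq_sub_pow_four_div_three_le_sin_sq (t / 2)]

section Summability

variable {ι E : Type*} [NormedAddCommGroup E] {a : ι → ℝ} {v : ι → E}

lemma summable_abs_mul_norm_pow_of_le {p q : ℕ} (hpq : p ≤ q) (ha : Summable a)
    (hq : Summable fun i ↦ |a i| * ‖v i‖ ^ q) : Summable fun i ↦ |a i| * ‖v i‖ ^ p := by
  refine (ha.abs.add hq).of_nonneg_of_le (fun i ↦ by positivity) fun i ↦ ?_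
  have hpow : ‖v i‖ ^ p ≤ 1 + ‖v i‖ ^ q := by
    rcases le_total ‖v i‖ 1 with h | h
    · linarith [pow_le_one₀ (n := p) (norm_nonneg _) h, pow_nonneg (norm_nonneg (v i)) q]
    · linarith [pow_le_pow_right₀ h hpq]
  calc |a i| * ‖v i‖ ^ p ≤ |a i| * (1 + ‖v i‖ ^ q) := by gcongr
    _ = |a i| + |a i| * ‖v i‖ ^ q := by ring

lemma summable_mul_of_summable_sq {f g : ι → ℝ} (hf : Summable fun i ↦ f i ^ 2)
    (hg : Summable fun i ↦ g i ^ 2) : Summable fun i ↦ f i * g i := by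
  refine .of_norm_bounded (hf.add hg) fun i ↦ ?_
  rw [Real.norm_eq_abs, abs_mul, ← sq_abs (f i), ← sq_abs (g i)]
  linarith [two_mul_le_add_sq |f i| |g i|, mul_nonneg (abs_nonneg (f i)) (abs_nonneg (g i))]

lemma summable_abs_mul_norm_pow_of_summable_exp {c : ℝ} (k : ℕ)
    (ha : Summable fun i ↦ Real.exp (2 * c * ‖v i‖) * a i ^ 2)
    (hv : Summable fun i ↦ ‖v i‖ ^ (2 * k) * Real.exp (-(2 * c) * ‖v i‖)) :
    Summable fun i ↦ |a i| * ‖v i‖ ^ k := by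
  have hsq (s y : ℝ) : Real.exp (2 * s * y) = Real.exp (s * y) ^ 2 := by
    rw [mul_assoc, two_mul, Real.exp_add, sq]
  have hcancel (y : ℝ) : Real.exp (c * y) * Real.exp (-c * y) = 1 := by
    rw [← Real.exp_add, neg_mul, add_neg_cancel, Real.exp_zero]
  have ha' : Summable fun i ↦ (Real.exp (c * ‖v i‖) * |a i|) ^ 2 :=
    ha.congr fun i ↦ by rw [hsq, mul_pow, sq_abs]
  have hv' : Summable fun i ↦ (Real.exp (-c * ‖v i‖) * ‖v i‖ ^ k) ^ 2 :=
    hv.congr fun i ↦ by rw [← mul_neg, hsq, mul_pow, mul_comm, ← pow_mul, mul_comm k]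
  refine (summable_mul_of_summable_sq ha' hv').congr fun i ↦ ?_
  rw [mul_mul_mul_comm, hcancel, one_mul]

end Summability

section Lattice

lemma pow_mul_exp_neg_le {c y : ℝ} (hc : 0 < c) (hy : 0 < y) (k m : ℕ) :
    y ^ k * Real.exp (-c * y) ≤ (k + m).factorial / c ^ (k + m) * y⁻¹ ^ m := by
  have hexp := Real.pow_div_factorial_le_exp (c * y) (by positivity) (k + m)
  rw [neg_mul, Real.exp_neg, ← div_eq_mul_inv, div_le_iff₀ (Real.exp_pos _)]
  calc y ^ k = (k + m).factorial / c ^ (k + m) * y⁻¹ ^ m *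
        ((c * y) ^ (k + m) / (k + m).factorial) := by
        rw [mul_pow, pow_add y, inv_pow]; field_simp
    _ ≤ _ := by gcongr

lemma summable_norm_pow_mul_exp_neg {ι E : Type*} [NormedAddCommGroup E] [NormedSpace ℝ E]
    [FiniteDimensional ℝ E] (L : Submodule ℤ E) [DiscreteTopology L] {v : ι → E}
    (hv : Function.Injective v) (hmem : ∀ i, v i ∈ L) (k : ℕ) {c : ℝ} (hc : 0 < c) :
    Summable fun i ↦ ‖v i‖ ^ k * Real.exp (-c * ‖v i‖) := by
  obtain ⟨m, hm⟩ := exists_gt (Module.finrank ℤ L)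
  have hinv := (ZLattice.summable_norm_pow_inv L m hm).comp_injective (hv.codRestrict hmem)
  refine .of_norm_bounded_eventually (hinv.mul_left ((k + m).factorial / c ^ (k + m))) ?_
  filter_upwards [hv.tendsto_cofinite.eventually (Filter.eventually_cofinite_ne 0)] with i hi
  rw [Real.norm_of_nonneg (by positivity)]
  exact pow_mul_exp_neg_le hc (norm_pos_iff.2 hi) k m

variable {d : ℕ}

lemma zv_apply (η : Fin d → ℤ) (i : Fin d) : zv η i = η i := rfl

lemma zv_zero : zv (0 : Fin d → ℤ) = 0 := by
  ext i
  simp [zv_apply]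

lemma zv_injective : Function.Injective (zv (d := d)) := by
  intro η η' h
  ext i
  have hi : zv η i = zv η' i := by rw [h]
  exact Int.cast_injective (α := ℝ) hi

lemma zv_mem_span_basisFun (η : Fin d → ℤ) :
    zv η ∈ Submodule.span ℤ (Set.range (EuclideanSpace.basisFun (Fin d) ℝ).toBasis) :=
  (Module.Basis.mem_span_iff_repr_mem ℤ _ _).2 fun i ↦ ⟨η i, by simp [zv]⟩

lemma summable_abs_mul_norm_zv_pow {a : (Fin d → ℤ) → ℝ} {c : ℝ} (hc : 0 < c)
    (ha : Summable fun η ↦ Real.exp (2 * c * ‖zv η‖) * a η ^ 2) (k : ℕ) :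
    Summable fun η ↦ |a η| * ‖zv η‖ ^ k :=
  summable_abs_mul_norm_pow_of_summable_exp k ha <|
    summable_norm_pow_mul_exp_neg _ zv_injective zv_mem_span_basisFun _ (by positivity)

end Lattice

section Symbol

variable {ι E : Type*} [NormedAddCommGroup E] [InnerProductSpace ℝ E] {a : ι → ℝ} {v : ι → E}

/-- The symbol `ξ ↦ ∑ᵢ aᵢ cos ⟨vᵢ, ξ⟩` of the difference operator with coefficients `aᵢ` and
shifts `vᵢ`; for `v = zv` this is the leading symbol `t₀`. -/
def cosSymbol (a : ι → ℝ) (v : ι → E) (ξ : E) : ℝ := ∑' i, a i * Real.cos ⟪v i, ξ⟫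

/-- The quadratic part `ξ ↦ ⟨ξ, Bξ⟩` of `cosSymbol a v` at `ξ = 0`, where
`B = -½ ∑ᵢ aᵢ vᵢ vᵢᵀ`, written without coordinates so that each summand has the sign of `-aᵢ`. -/
def symbolQuadraticPart (a : ι → ℝ) (v : ι → E) (ξ : E) : ℝ := ∑' i, -a i / 2 * ⟪v i, ξ⟫ ^ 2

lemma summable_mul_inner_mul_inner (h : Summable fun i ↦ |a i| * ‖v i‖ ^ 2) (x y : E) :
    Summable fun i ↦ a i * ⟪v i, x⟫ * ⟪v i, y⟫ := by
  refine .of_norm_bounded (h.mul_right (‖x‖ * ‖y‖)) fun i ↦ ?_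
  calc ‖a i * ⟪v i, x⟫ * ⟪v i, y⟫‖ = |a i| * |⟪v i, x⟫| * |⟪v i, y⟫| := by
        rw [Real.norm_eq_abs, abs_mul, abs_mul]
    _ ≤ |a i| * (‖v i‖ * ‖x‖) * (‖v i‖ * ‖y‖) := by
        gcongr <;> exact abs_real_inner_le_norm _ _
    _ = |a i| * ‖v i‖ ^ 2 * (‖x‖ * ‖y‖) := by ring

lemma hasSum_symbolQuadraticPart (h : Summable fun i ↦ |a i| * ‖v i‖ ^ 2) (ξ : E) :
    HasSum (fun i ↦ -a i / 2 * ⟪v i, ξ⟫ ^ 2) (symbolQuadraticPart a v ξ) :=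
  (((summable_mul_inner_mul_inner h ξ ξ).mul_left (-1 / 2)).congr fun i ↦ by ring).hasSum

lemma hasSum_cosSymbol (h : Summable a) (ξ : E) :
    HasSum (fun i ↦ a i * Real.cos ⟪v i, ξ⟫) (cosSymbol a v ξ) := by
  refine (Summable.of_norm_bounded h.abs fun i ↦ ?_).hasSum
  rw [Real.norm_eq_abs, abs_mul]
  exact mul_le_of_le_one_right (abs_nonneg _) (Real.abs_cos_le_one _)

lemma exists_inner_ne_zero_of_span_eq_top {s : Set E} (hs : Submodule.span ℝ s = ⊤) {ξ : E}
    (hξ : ξ ≠ 0) : ∃ w ∈ s, ⟪w, ξ⟫ ≠ 0 := by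
  by_contra! horth
  have hzero : innerₗ E ξ = 0 := LinearMap.ext_on hs fun w hw ↦ by
    rw [innerₗ_apply_apply, real_inner_comm, horth w hw, LinearMap.zero_apply]
  exact hξ (inner_self_eq_zero.1 (LinearMap.congr_fun hzero ξ))

lemma symbolQuadraticPart_pos (hneg : ∀ i, v i ≠ 0 → a i ≤ 0)
    (h : Summable fun i ↦ |a i| * ‖v i‖ ^ 2)
    (hspan : Submodule.span ℝ {w : E | ∃ i, a i < 0 ∧ w = v i} = ⊤) {ξ : E} (hξ : ξ ≠ 0) :
    0 < symbolQuadraticPart a v ξ := by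
  have hnonneg (i : ι) : 0 ≤ -a i / 2 * ⟪v i, ξ⟫ ^ 2 := by
    rcases eq_or_ne (v i) 0 with hv | hv
    · simp [hv]
    · exact mul_nonneg (by linarith [hneg i hv]) (sq_nonneg _)
  obtain ⟨_, ⟨i, hi, rfl⟩, hinner⟩ := exists_inner_ne_zero_of_span_eq_top hspan hξ
  exact (hasSum_symbolQuadraticPart h ξ).summable.tsum_pos hnonneg i
    (mul_pos (by linarith) (by positivity))

lemma abs_cosSymbol_sub_symbolQuadraticPart_le (ha : HasSum a 0)
    (h : Summable fun i ↦ |a i| * ‖v i‖ ^ 4) (ξ : E) :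
    |cosSymbol a v ξ - symbolQuadraticPart a v ξ| ≤
      (∑' i, |a i| * ‖v i‖ ^ 4) * (‖ξ‖ ^ 4 / 24) := by
  have hsecond := summable_abs_mul_norm_pow_of_le (p := 2) (by norm_num) ha.summable h
  have hdiff := ((hasSum_cosSymbol (v := v) ha.summable ξ).sub ha).sub
    (hasSum_symbolQuadraticPart hsecond ξ)
  rw [sub_zero] at hdiff
  refine hdiff.norm_le_of_bounded (h.hasSum.mul_right _) fun i ↦ ?_
  calc ‖a i * Real.cos ⟪v i, ξ⟫ - a i - -a i / 2 * ⟪v i, ξ⟫ ^ 2‖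
      = |a i| * |Real.cos ⟪v i, ξ⟫ - (1 - ⟪v i, ξ⟫ ^ 2 / 2)| := by
        rw [Real.norm_eq_abs, ← abs_mul]; ring_nf
    _ ≤ |a i| * (⟪v i, ξ⟫ ^ 4 / 24) := by
        gcongr; exact abs_cos_sub_one_sub_sq_div_two_le _
    _ = |a i| * (|⟪v i, ξ⟫| ^ 4 / 24) := by rw [Even.pow_abs (by decide)]
    _ ≤ |a i| * ((‖v i‖ * ‖ξ‖) ^ 4 / 24) := by
        gcongr; exact abs_real_inner_le_norm _ _
    _ = |a i| * ‖v i‖ ^ 4 * (‖ξ‖ ^ 4 / 24) := by ring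

end Symbol

section Coordinates

variable {ι n : Type*} [Fintype n] {a : ι → ℝ} {v : ι → EuclideanSpace ℝ n}

lemma summable_mul_apply_mul_apply (h : Summable fun i ↦ |a i| * ‖v i‖ ^ 2) (ν μ : n) :
    Summable fun i ↦ a i * v i ν * v i μ := by
  simpa [EuclideanSpace.inner_single_right] using summable_mul_inner_mul_inner h
    (EuclideanSpace.single ν (1 : ℝ)) (EuclideanSpace.single μ (1 : ℝ))

lemma sum_mul_mul_eq_symbolQuadraticPart (h : Summable fun i ↦ |a i| * ‖v i‖ ^ 2)
    {B : Matrix n n ℝ} (hB : ∀ ν μ, B ν μ = -(1 / 2) * ∑' i, a i * v i ν * v i μ)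
    (ξ : EuclideanSpace ℝ n) :
    ∑ ν, ∑ μ, ξ ν * B ν μ * ξ μ = symbolQuadraticPart a v ξ := by
  have hentries : HasSum (fun i ↦ ∑ ν, ∑ μ, ξ ν * (-(1 / 2) * (a i * v i ν * v i μ)) * ξ μ)
      (∑ ν, ∑ μ, ξ ν * B ν μ * ξ μ) := by
    refine hasSum_sum fun ν _ ↦ hasSum_sum fun μ _ ↦ ?_
    rw [hB]
    exact (((summable_mul_apply_mul_apply h ν μ).hasSum.mul_left _).mul_left _).mul_right _
  rw [← hentries.tsum_eq, symbolQuadraticPart]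
  congr! 2 with i
  have hinner : ⟪v i, ξ⟫ = ∑ ν, ξ ν * v i ν := by
    simp only [PiLp.inner_apply, RCLike.inner_apply, conj_trivial]
  rw [hinner, sq, Finset.sum_mul_sum]
  simp only [Finset.mul_sum]
  congr! 2
  ring

end Coordinates

theorem stmt1_general {ι n : Type*} [Fintype n] {a : ι → ℝ} {v : ι → EuclideanSpace ℝ n}
    (hsum : HasSum a 0) (hneg : ∀ i, v i ≠ 0 → a i ≤ 0)
    (hfourth : Summable fun i ↦ |a i| * ‖v i‖ ^ 4)
    (hspan : Submodule.span ℝ {w | ∃ i, a i < 0 ∧ w = v i} = ⊤) :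
    (∀ ν μ, Summable fun i ↦ a i * v i ν * v i μ) ∧
      ∀ B : Matrix n n ℝ, (∀ ν μ, B ν μ = -(1 / 2) * ∑' i, a i * v i ν * v i μ) →
        (∀ ν μ, B ν μ = B μ ν) ∧
        (∀ ξ : EuclideanSpace ℝ n, ξ ≠ 0 → 0 < ∑ ν, ∑ μ, ξ ν * B ν μ * ξ μ) ∧
        ∃ C : ℝ, 0 < C ∧ ∀ ξ : EuclideanSpace ℝ n,
          |cosSymbol a v ξ - ∑ ν, ∑ μ, ξ ν * B ν μ * ξ μ| ≤ C * ‖ξ‖ ^ 4 := by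
  have hsecond := summable_abs_mul_norm_pow_of_le (p := 2) (by norm_num) hsum.summable hfourth
  refine ⟨summable_mul_apply_mul_apply hsecond, fun B hB ↦ ⟨fun ν μ ↦ ?_, ?_, ?_⟩⟩
  · simp only [hB, mul_right_comm]
  · intro ξ hξ
    rw [sum_mul_mul_eq_symbolQuadraticPart hsecond hB]
    exact symbolQuadraticPart_pos hneg hsecond hspan hξ
  · refine ⟨(∑' i, |a i| * ‖v i‖ ^ 4) / 24 + 1, by positivity, fun ξ ↦ ?_⟩
    rw [sum_mul_mul_eq_symbolQuadraticPart hsecond hB]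
    linarith [abs_cosSymbol_sub_symbolQuadraticPart_le hsum hfourth ξ,
      show 0 ≤ ‖ξ‖ ^ 4 by positivity]

/-- Lemma 1.2 (c): for fixed `x`, the leading symbol `t₀(ξ) = Σ_η ã_η cos(η·ξ)` has the
expansion `t₀(ξ) = ⟨ξ, Bξ⟩ + O(|ξ|⁴)` at `ξ = 0`, where the symmetric matrix
`B_{νμ} = -(1/2) Σ_η ã_η η_ν η_μ` is well defined and positive definite. -/
theorem stmt1 (d : ℕ) (hd : 1 ≤ d) (a : (Fin d → ℤ) → ℝ)
    (hsum : HasSum a 0)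
    (hneg : ∀ η : Fin d → ℤ, η ≠ 0 → a η ≤ 0)
    (heven : ∀ η : Fin d → ℤ, a η = a (-η))
    (hdecay : ∀ c : ℝ, 0 < c → ∃ C : ℝ, 0 < C ∧
      Summable (fun η : Fin d → ℤ => Real.exp (2 * c * ‖zv η‖) * (a η) ^ 2) ∧
      ∑' η : Fin d → ℤ, Real.exp (2 * c * ‖zv η‖) * (a η) ^ 2 ≤ C)
    (hspan : Submodule.span ℝ {w : Ed d | ∃ η : Fin d → ℤ, a η < 0 ∧ w = zv η} = ⊤) :
    (∀ ν μ : Fin d, Summable (fun η : Fin d → ℤ => a η * (η ν : ℝ) * (η μ : ℝ)))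
    ∧ ∀ B : Matrix (Fin d) (Fin d) ℝ,
        (∀ ν μ : Fin d, B ν μ = -(1/2) * ∑' η : Fin d → ℤ, a η * (η ν : ℝ) * (η μ : ℝ)) →
        (∀ ν μ : Fin d, B ν μ = B μ ν)
        ∧ (∀ ξ : Ed d, ξ ≠ 0 → 0 < ∑ ν : Fin d, ∑ μ : Fin d, ξ ν * B ν μ * ξ μ)
        ∧ ∃ C' : ℝ, 0 < C' ∧ ∃ δ : ℝ, 0 < δ ∧ ∀ ξ : Ed d, ‖ξ‖ ≤ δ →
            |(∑' η : Fin d → ℤ, a η * Real.cos ⟪zv η, ξ⟫)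
                - ∑ ν : Fin d, ∑ μ : Fin d, ξ ν * B ν μ * ξ μ|
              ≤ C' * ‖ξ‖ ^ 4 := by
  obtain ⟨_, _, hexp, _⟩ := hdecay 1 one_pos
  obtain ⟨hentries, hB⟩ := stmt1_general hsum (fun η hη ↦ hneg η fun h ↦ hη (h ▸ zv_zero))
    (summable_abs_mul_norm_zv_pow one_pos hexp 4) hspan
  exact ⟨hentries, fun B h ↦ (hB B h).imp_right (And.imp_right fun ⟨C, hC, hle⟩ ↦
    ⟨C, hC, 1, one_pos, fun ξ _ ↦ hle ξ⟩)⟩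
end
end

section
/- Let h ∈ C^∞(ℝ^d × ℝ^d, ℝ) be hyperconvex in each fibre, i.e. for every x ∈ ℝ^d there exists α(x) > 0 such that ⟨v, D²_ξ h(x,ξ) v⟩ ≥ α(x) |v|² for all ξ, v ∈ ℝ^d. Then the fibre derivative 𝒟_F h : ℝ^d × ℝ^d → ℝ^d × ℝ^d, (x, ξ) ↦ (x, ∇_ξ h(x,ξ)), is a C^∞ diffeomorphism of ℝ^{2d}; in particular, for each x the gradient map ξ ↦ ∇_ξ h(x,ξ) is a bijection of ℝ^d. -/
open scoped RealInnerProductSpace Classical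
noncomputable section

/-!
Hyperconvexity makes each fibre gradient `g = ∇_ξ h(x, ·)` strongly monotone,
`α ‖b - a‖² ≤ ⟪g b - g a, b - a⟫`, and its derivative invertible by Lax–Milgram. Invertible
derivatives make `g` open and strong monotonicity makes its range closed, so by connectedness `g`
is onto; it is injective by strong monotonicity. The derivative of `(x, ξ) ↦ (x, ∇_ξ h(x, ξ))` is
block triangular with invertible diagonal blocks, so the inverse function theorem makes this
bijection a diffeomorphism.
-/

open Filter Function InnerProductSpace Topology

/- `AntilipschitzWith.isClosed_range` asks for uniform continuity, which a gradient need not have;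
pulling back the Cauchy filter `𝓝 y` only uses the antilipschitz bound. -/
theorem isClosed_range_of_antilipschitzWith {α β : Type*} [PseudoEMetricSpace α] [CompleteSpace α]
    [EMetricSpace β] {K : NNReal} {f : α → β} (hf : AntilipschitzWith K f) (hc : Continuous f) :
    IsClosed (Set.range f) := by
  refine isClosed_iff_clusterPt.2 fun y hy => ?_
  have : (comap f (𝓝 y)).NeBot :=
    comap_neBot_iff_frequently.2 (mem_closure_iff_frequently.1 (mem_closure_iff_clusterPt.2 hy))
  obtain ⟨x, hx⟩ := CompleteSpace.complete ((cauchy_nhds (a := y)).comap hf.comap_uniformity_le)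
  exact ⟨x, tendsto_nhds_unique ((hc.tendsto x).mono_left hx) tendsto_comap⟩

theorem differentiable_fderiv_of_contDiff_two {𝕜 E F : Type*} [NontriviallyNormedField 𝕜]
    [NormedAddCommGroup E] [NormedSpace 𝕜 E] [NormedAddCommGroup F] [NormedSpace 𝕜 F] {f : E → F}
    (hf : ContDiff 𝕜 2 f) : Differentiable 𝕜 (fderiv 𝕜 f) :=
  (hf.fderiv_right one_add_one_eq_two.le).differentiable one_ne_zero

section InverseFunction

variable {𝕜 X E F : Type*} [NormedAddCommGroup X] [NormedAddCommGroup E] [NormedAddCommGroup F]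

theorem contDiff_symm_of_hasFDerivAt_equiv [RCLike 𝕜] [NormedSpace 𝕜 E] [NormedSpace 𝕜 F]
    [CompleteSpace E] {n : WithTop ℕ∞} (hn : n ≠ 0) (f : E ≃ F) {f' : E → E ≃L[𝕜] F}
    (hf' : ∀ p, HasFDerivAt f (f' p : E →L[𝕜] F) p) (hf : ContDiff 𝕜 n f) :
    ContDiff 𝕜 n f.symm :=
  have hopen : IsOpenMap f := isOpenMap_of_hasStrictFDerivAt_equiv fun p =>
    hf.contDiffAt.hasStrictFDerivAt' (hf' p) hn
  (f.toHomeomorphOfContinuousOpen hf.continuous hopen).contDiff_symm hf' hf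

theorem hasFDerivAt_fst_prodMk_of_partial [NontriviallyNormedField 𝕜] [NormedSpace 𝕜 X]
    [NormedSpace 𝕜 E] [NormedSpace 𝕜 F] {G : X × E → F} {p : X × E} {e : E ≃L[𝕜] F}
    (hG : DifferentiableAt 𝕜 G p) (he : HasFDerivAt (fun ξ => G (p.1, ξ)) (e : E →L[𝕜] F) p.2) :
    HasFDerivAt (fun q => (q.1, G q))
      ((ContinuousLinearEquiv.refl 𝕜 X).skewProd e (fderiv 𝕜 G p ∘L .inl 𝕜 X E) :
        X × E →L[𝕜] X × F) p := by
  have hpartial : fderiv 𝕜 G p ∘L .inr 𝕜 X E = e :=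
    (hG.hasFDerivAt.comp p.2 (hasFDerivAt_prodMk_right p.1 p.2)).unique he
  refine (hasFDerivAt_fst.prodMk hG.hasFDerivAt).congr_fderiv ?_
  rw [← ContinuousLinearMap.coprod_comp_inl_inr (fderiv 𝕜 G p), hpartial]
  ext v <;> simp [add_comm]

end InverseFunction

section StronglyMonotone

variable {E : Type*} [NormedAddCommGroup E] [InnerProductSpace ℝ E] {c : ℝ} {g : E → E}

/-- A map of an inner product space is strongly monotone with modulus `c` if
`⟪g b - g a, b - a⟫ ≥ c ‖b - a‖²` for all `a`, `b`. The sign of `c` is left unrestricted. -/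
def StronglyMonotone (c : ℝ) (g : E → E) : Prop :=
  ∀ a b, c * ‖b - a‖ ^ 2 ≤ ⟪g b - g a, b - a⟫

theorem stronglyMonotone_of_hasFDerivAt {g' : E → E →L[ℝ] E} (hg : ∀ ξ, HasFDerivAt g (g' ξ) ξ)
    (hc : ∀ ξ v, c * ‖v‖ ^ 2 ≤ ⟪g' ξ v, v⟫) : StronglyMonotone c g := by
  intro a b
  have hderiv (t : ℝ) : HasDerivAt (fun t => ⟪g (AffineMap.lineMap a b t), b - a⟫)
      ⟪g' (AffineMap.lineMap a b t) (b - a), b - a⟫ t := by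
    simpa using ((hg _).comp_hasDerivAt t AffineMap.hasDerivAt_lineMap).inner ℝ
      (hasDerivAt_const t (b - a))
  have hmean := mul_sub_le_image_sub_of_le_deriv (fun t => (hderiv t).differentiableAt)
    (fun t => (hc _ _).trans_eq (hderiv t).deriv.symm) zero_le_one
  simpa [inner_sub_left] using hmean

namespace StronglyMonotone

theorem antilipschitzWith (hg : StronglyMonotone c g) (hc : 0 < c) :
    AntilipschitzWith c.toNNReal⁻¹ g := by
  refine .of_le_mul_dist fun a b => ?_
  rw [NNReal.coe_inv, Real.coe_toNNReal c hc.le, le_inv_mul_iff₀ hc, dist_eq_norm, dist_eq_norm]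
  rcases (norm_nonneg (a - b)).eq_or_lt with hab | hab
  · simp [← hab]
  · refine le_of_mul_le_mul_right ?_ hab
    calc c * ‖a - b‖ * ‖a - b‖ = c * ‖a - b‖ ^ 2 := by ring
      _ ≤ ⟪g a - g b, a - b⟫ := hg b a
      _ ≤ ‖g a - g b‖ * ‖a - b‖ := real_inner_le_norm _ _

theorem bijective [CompleteSpace E] (hg : StronglyMonotone c g) (hc : 0 < c)
    (hcont : Continuous g) (hopen : IsOpenMap g) : Bijective g := by
  have hanti := hg.antilipschitzWith hc
  have hclopen : IsClopen (Set.range g) :=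
    ⟨isClosed_range_of_antilipschitzWith hanti hcont, hopen.isOpen_range⟩
  exact ⟨hanti.injective, Set.range_eq_univ.1 (hclopen.eq_univ (Set.range_nonempty g))⟩

end StronglyMonotone

end StronglyMonotone

section Gradient

variable {X E : Type*} [NormedAddCommGroup X] [NormedSpace ℝ X]
  [NormedAddCommGroup E] [InnerProductSpace ℝ E] [CompleteSpace E] {f : E → ℝ} {ξ : E}

theorem contDiff_gradient {m n : WithTop ℕ∞} {h : X → E → ℝ} {u : X → E}
    (hh : ContDiff ℝ m (uncurry h)) (hu : ContDiff ℝ n u) (hnm : n + 1 ≤ m) :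
    ContDiff ℝ n (fun x => gradient (h x) (u x)) :=
  LinearIsometryEquiv.contDiff (𝕜 := ℝ) (toDual ℝ E).symm |>.comp (hh.fderiv hu hnm)

theorem hasFDerivAt_gradient_of_isCoercive (hf : DifferentiableAt ℝ (fderiv ℝ f) ξ)
    (hcoer : IsCoercive (fderiv ℝ (fderiv ℝ f) ξ)) :
    HasFDerivAt (gradient f) (hcoer.continuousLinearEquivOfBilin : E →L[ℝ] E) ξ := by
  refine (toDual ℝ E).comp_hasFDerivAt_iff.1 ?_
  rw [toDual_comp_gradient]
  refine hf.hasFDerivAt.congr_fderiv ?_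
  ext v w
  exact (hcoer.continuousLinearEquivOfBilin_apply v w).symm

end Gradient

section Hyperconvex

variable {E : Type*} [NormedAddCommGroup E] {f : E → ℝ}

/-- A function is hyperconvex if its Hessian is bounded below by a positive constant, uniformly in
the base point. -/
def IsHyperconvex [NormedSpace ℝ E] (f : E → ℝ) : Prop :=
  ∃ α : ℝ, 0 < α ∧ ∀ ξ v : E, α * ‖v‖ ^ 2 ≤ iteratedFDeriv ℝ 2 f ξ ![v, v]

namespace IsHyperconvex

theorem isCoercive_fderiv_fderiv [NormedSpace ℝ E] (hf : IsHyperconvex f) (ξ : E) :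
    IsCoercive (fderiv ℝ (fderiv ℝ f) ξ) := by
  obtain ⟨α, hα, hle⟩ := hf
  refine ⟨α, hα, fun v => ?_⟩
  simpa [iteratedFDeriv_two_apply, sq, mul_assoc] using hle ξ v

variable [InnerProductSpace ℝ E] [CompleteSpace E]

theorem stronglyMonotone_gradient (hf : IsHyperconvex f) (hd : Differentiable ℝ (fderiv ℝ f)) :
    ∃ α : ℝ, 0 < α ∧ StronglyMonotone α (gradient f) := by
  have ⟨α, hα, hle⟩ := hf
  refine ⟨α, hα, stronglyMonotone_of_hasFDerivAt
    (fun ξ => hasFDerivAt_gradient_of_isCoercive (hd ξ) (hf.isCoercive_fderiv_fderiv ξ))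
    fun ξ v => ?_⟩
  simpa [iteratedFDeriv_two_apply] using hle ξ v

theorem bijective_gradient (hf : IsHyperconvex f) (hsmooth : ContDiff ℝ 2 f) :
    Bijective (gradient f) := by
  have hd : Differentiable ℝ (fderiv ℝ f) := differentiable_fderiv_of_contDiff_two hsmooth
  have hgrad : ContDiff ℝ 1 (gradient f) :=
    contDiff_gradient (hsmooth.comp contDiff_snd) contDiff_id one_add_one_eq_two.le
  have hopen : IsOpenMap (gradient f) := isOpenMap_of_hasStrictFDerivAt_equiv fun ξ =>
    hgrad.contDiffAt.hasStrictFDerivAt'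
      (hasFDerivAt_gradient_of_isCoercive (hd ξ) (hf.isCoercive_fderiv_fderiv ξ)) one_ne_zero
  obtain ⟨α, hα, hmono⟩ := hf.stronglyMonotone_gradient hd
  exact hmono.bijective hα hgrad.continuous hopen

end IsHyperconvex

end Hyperconvex

section FibreDerivative

variable {X E : Type*} [NormedAddCommGroup E] [InnerProductSpace ℝ E] [CompleteSpace E]
  {h : X → E → ℝ}

/-- The fibre derivative `(x, ξ) ↦ (x, ∇_ξ h(x, ξ))` of a Hamilton function, with the cotangent
space at `x` identified with `E` by the inner product. -/
def fibreDeriv (h : X → E → ℝ) (p : X × E) : X × E :=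
  (p.1, gradient (h p.1) p.2)

theorem bijective_fibreDeriv (hbij : ∀ x, Bijective (gradient (h x))) :
    Bijective (fibreDeriv h) := by
  refine ⟨fun ⟨x, ξ⟩ ⟨y, η⟩ heq => ?_, fun ⟨x, η⟩ => ?_⟩
  · obtain ⟨rfl, hgrad⟩ : x = y ∧ gradient (h x) ξ = gradient (h y) η := Prod.mk.inj heq
    exact congrArg (Prod.mk x) ((hbij x).injective hgrad)
  · obtain ⟨ξ, hξ⟩ := (hbij x).surjective η
    exact ⟨(x, ξ), congrArg (Prod.mk x) hξ⟩

variable [NormedAddCommGroup X] [NormedSpace ℝ X]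

theorem contDiff_fibreDeriv {m n : WithTop ℕ∞} (hsmooth : ContDiff ℝ m (uncurry h))
    (hnm : n + 1 ≤ m) : ContDiff ℝ n (fibreDeriv h) :=
  contDiff_fst.prodMk <|
    contDiff_gradient (hsmooth.comp (contDiff_fst.fst.prodMk contDiff_snd)) contDiff_snd hnm

theorem exists_hasFDerivAt_fibreDeriv_equiv (hsmooth : ContDiff ℝ 2 (uncurry h))
    (hconv : ∀ x, IsHyperconvex (h x)) (p : X × E) :
    ∃ e : (X × E) ≃L[ℝ] (X × E), HasFDerivAt (fibreDeriv h) (e : X × E →L[ℝ] X × E) p := by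
  have hgrad : ContDiff ℝ 1 fun q : X × E => gradient (h q.1) q.2 :=
    (contDiff_fibreDeriv hsmooth one_add_one_eq_two.le).snd
  have hd : Differentiable ℝ (fderiv ℝ (h p.1)) :=
    differentiable_fderiv_of_contDiff_two (hsmooth.comp (contDiff_prodMk_right p.1))
  exact ⟨_, hasFDerivAt_fst_prodMk_of_partial (hgrad.differentiable one_ne_zero p)
    (hasFDerivAt_gradient_of_isCoercive (hd p.2) ((hconv p.1).isCoercive_fderiv_fderiv p.2))⟩

theorem stmt4_general [CompleteSpace X] {n : WithTop ℕ∞} (hn : n ≠ 0) (h : X → E → ℝ)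
    (hsmooth : ContDiff ℝ (n + 1) (uncurry h))
    (hconv : ∀ x, IsHyperconvex (h x)) :
    ∃ F : (X × E) ≃ (X × E),
      (∀ p, F p = fibreDeriv h p) ∧ ContDiff ℝ n F ∧ ContDiff ℝ n F.symm ∧
      ∀ x, Bijective (gradient (h x)) := by
  have htwo : ContDiff ℝ 2 (uncurry h) := hsmooth.of_le <|
    one_add_one_eq_two.symm.trans_le (by gcongr; exact ENat.one_le_iff_ne_zero_withTop.2 hn)
  have hbij (x : X) : Bijective (gradient (h x)) :=
    (hconv x).bijective_gradient (htwo.comp (contDiff_prodMk_right x))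
  have hF : ContDiff ℝ n (fibreDeriv h) := contDiff_fibreDeriv hsmooth le_rfl
  choose F' hF' using exists_hasFDerivAt_fibreDeriv_equiv htwo hconv
  let F : (X × E) ≃ (X × E) := .ofBijective _ (bijective_fibreDeriv hbij)
  exact ⟨F, fun _ => rfl, hF, contDiff_symm_of_hasFDerivAt_equiv hn F hF' hF, hbij⟩

end FibreDerivative

/-- Proposition 2.8: a smooth Hamilton function which is hyperconvex in each fibre is
hyperregular, i.e. its fibre derivative `(x,ξ) ↦ (x, ∇_ξ h(x,ξ))` is a smooth diffeomorphism
of `ℝ^{2d}`; in particular each fibrewise gradient map `ξ ↦ ∇_ξ h(x,ξ)` is a bijection. -/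
theorem stmt4 (d : ℕ) (h : Ed d → Ed d → ℝ)
    (hsmooth : ContDiff ℝ (⊤ : ℕ∞) (fun p : Ed d × Ed d => h p.1 p.2))
    (hconv : ∀ x : Ed d, ∃ α : ℝ, 0 < α ∧ ∀ ξ v : Ed d,
      α * ‖v‖ ^ 2 ≤ iteratedFDeriv ℝ 2 (h x) ξ ![v, v]) :
    ∃ F : (Ed d × Ed d) ≃ (Ed d × Ed d),
      (∀ p : Ed d × Ed d, F p = (p.1, gradient (h p.1) p.2)) ∧
      ContDiff ℝ (⊤ : ℕ∞) ⇑F ∧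
      ContDiff ℝ (⊤ : ℕ∞) ⇑F.symm ∧
      ∀ x : Ed d, Function.Bijective (fun ξ : Ed d => gradient (h x) ξ) :=
  stmt4_general (n := (⊤ : ℕ∞)) (by simp) h hsmooth hconv
end
end

section
/- Let h ∈ C^∞(ℝ^d × ℝ^d, ℝ) be hyperconvex and even in each fibre, with h(·,0) bounded from above, let ξ_h(x,·) := (∇_ξ h(x,·))^{-1}, fix E ∈ ℝ, and set M̃ := {x ∈ ℝ^d : h(x,0) < E}. Then there exists a unique function λ : M̃ × (ℝ^d \ {0}) → (0,∞) such that h(x, ξ_h(x, λ(x,v) v)) = E for all x ∈ M̃ and v ≠ 0. Moreover λ is C^∞ on M̃ × (ℝ^d \ {0}) and satisfies λ(x, cv) = c^{−1} λ(x,v) for every c > 0. -/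
open scoped RealInnerProductSpace Classical
noncomputable section

/-!
Fix `x`, write `f = h x`, and follow the curve `z t = ξ x (t • v)`, along which `∇ f (z t) = t • v`.
Differentiating this identity gives `D(∇ f) (z') = v`, so `f ∘ z` has derivative
`⟪t • v, z'⟫ = t * ⟪D(∇ f) (z'), z'⟫`, which is positive for `t > 0` by hyperconvexity. The energy
therefore increases strictly from its minimum `f (ξ x 0)`, and convexity of `f` prevents it from
staying bounded, so it takes each value `E > f (ξ x 0)` at exactly one `t > 0`. An even `f` is
critical at the origin, so then `ξ x 0 = 0`.

Smoothness comes from the implicit function theorem, used twice: for `ξ`, where the partial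
derivative of `∇ (h x) ξ - v` in `ξ` is invertible by Lax–Milgram, and for the scale `lam`, where
the derivative of the energy along the ray is nonzero. Homogeneity is uniqueness on the ray.
-/

open scoped Gradient Topology
open Function Set

section ImplicitFunction

lemma contDiffAt_of_eventually_unique_root {𝕜 X Y Z : Type*} [RCLike 𝕜]
    [NormedAddCommGroup X] [NormedSpace 𝕜 X] [CompleteSpace X]
    [NormedAddCommGroup Y] [NormedSpace 𝕜 Y] [CompleteSpace Y]
    [NormedAddCommGroup Z] [NormedSpace 𝕜 Z] [CompleteSpace Z]
    {n : WithTop ℕ∞} (hn : n ≠ 0) {F : X × Y → Z} {φ : X → Y} {a : X}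
    (hF : ContDiffAt 𝕜 n F (a, φ a))
    (hinv : (fderiv 𝕜 (fun y => F (a, y)) (φ a)).IsInvertible)
    (hφ : ∀ᶠ p in 𝓝 (a, φ a), F p = F (a, φ a) → p.2 = φ p.1) :
    ContDiffAt 𝕜 n φ a := by
  have hpartial : fderiv 𝕜 (fun y => F (a, y)) (φ a) =
      fderiv 𝕜 F (a, φ a) ∘L .inr 𝕜 X Y :=
    ((hF.differentiableAt hn).hasFDerivAt.comp (φ a)
      (hasFDerivAt_prodMk_right a (φ a))).fderiv
  rw [hpartial] at hinv
  set ψ := hF.implicitFunction hn hinv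
  have hψ : ContDiffAt 𝕜 n ψ a := hF.contDiffAt_implicitFunction hn hinv
  have hψa : ψ a = φ a := hF.implicitFunction_apply_self hn hinv
  have hlim : Filter.Tendsto (fun x => (x, ψ x)) (𝓝 a) (𝓝 (a, φ a)) := by
    simpa only [hψa, id] using (continuousAt_id.prodMk hψ.continuousAt).tendsto
  refine hψ.congr_of_eventuallyEq ?_
  filter_upwards [hF.eventually_apply_implicitFunction hn hinv, hlim.eventually hφ]
    with x hroot hunique
  exact (hunique hroot).symm

lemma contDiffOn_of_unique_pos_root {P : Type*} [NormedAddCommGroup P] [NormedSpace ℝ P]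
    [CompleteSpace P] {n : WithTop ℕ∞} (hn : n ≠ 0) {g : P × ℝ → ℝ} (hg : ContDiff ℝ n g)
    {U : Set P} (hU : IsOpen U) {c : ℝ} {r : P → ℝ}
    (hr_pos : ∀ p ∈ U, 0 < r p) (hr : ∀ p ∈ U, g (p, r p) = c)
    (hr_unique : ∀ p ∈ U, ∀ t, 0 < t → g (p, t) = c → t = r p)
    (hderiv : ∀ p ∈ U, deriv (fun t => g (p, t)) (r p) ≠ 0) :
    ContDiffOn ℝ n r U := by
  intro p hp
  have hinv : (fderiv ℝ (fun t => g (p, t)) (r p)).IsInvertible :=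
    ⟨ContinuousLinearEquiv.unitsEquivAut ℝ (Units.mk0 _ (hderiv p hp)), by ext; simp⟩
  refine (contDiffAt_of_eventually_unique_root hn hg.contDiffAt hinv ?_).contDiffWithinAt
  filter_upwards [(hU.prod isOpen_Ioi).mem_nhds (mk_mem_prod hp (hr_pos p hp))]
    with q hq hgq
  exact hr_unique q.1 hq.1 q.2 hq.2 (hgq.trans (hr p hp))

end ImplicitFunction

section Gradient

variable {X V : Type*} [NormedAddCommGroup X] [NormedSpace ℝ X]
  [NormedAddCommGroup V] [InnerProductSpace ℝ V] [CompleteSpace V] {f : V → ℝ}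

lemma gradient_zero_of_even (hf : Function.Even f) : ∇ f 0 = 0 := by
  have hcomp := (ContinuousLinearEquiv.neg ℝ (M := V)).comp_right_fderiv (f := f) (x := 0)
  have heven : f ∘ ContinuousLinearEquiv.neg ℝ = f := funext hf
  rw [heven, map_zero] at hcomp
  have hfderiv : fderiv ℝ f 0 = 0 := by
    ext w
    have hneg : fderiv ℝ f 0 w = -fderiv ℝ f 0 w := by
      simpa using DFunLike.congr_fun hcomp w
    exact self_eq_neg.mp hneg
  rw [gradient, hfderiv, map_zero]

lemma contDiff_gradient_s6 {n : WithTop ℕ∞} {h : X → V → ℝ}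
    (hh : ContDiff ℝ (n + 1) (uncurry h)) :
    ContDiff ℝ n fun p : X × V => ∇ (h p.1) p.2 := by
  have hfderiv : ContDiff ℝ n fun p : X × V => fderiv ℝ (h p.1) p.2 :=
    ContDiff.fderiv (f := fun p : X × V => h p.1)
      (hh.comp ((contDiff_fst.comp contDiff_fst).prodMk contDiff_snd)) contDiff_snd le_rfl
  exact (InnerProductSpace.toDual ℝ V).symm.toContinuousLinearEquiv.contDiff.comp hfderiv

lemma differentiable_gradient (hf : ContDiff ℝ 2 f) : Differentiable ℝ (∇ f) :=
  (InnerProductSpace.toDual ℝ V).symm.toContinuousLinearEquiv.differentiable.comp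
    ((hf.fderiv_right (m := 1) (by norm_num)).differentiable one_ne_zero)

lemma inner_fderiv_gradient (hf : ContDiff ℝ 2 f) (ξ v w : V) :
    ⟪fderiv ℝ (∇ f) ξ v, w⟫ = iteratedFDeriv ℝ 2 f ξ ![v, w] := by
  have hf' : DifferentiableAt ℝ (fderiv ℝ f) ξ :=
    (hf.fderiv_right (m := 1) (by norm_num)).differentiable one_ne_zero ξ
  have hgrad : HasFDerivAt (∇ f) _ ξ :=
    (InnerProductSpace.toDual ℝ V).symm.toContinuousLinearEquiv.hasFDerivAt.comp ξ
      hf'.hasFDerivAt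
  rw [hgrad.fderiv, iteratedFDeriv_two_apply]
  exact InnerProductSpace.toDual_symm_apply

lemma add_inner_gradient_le (hf : Differentiable ℝ f)
    (hmono : ∀ ξ η, 0 ≤ ⟪∇ f η - ∇ f ξ, η - ξ⟫) (ξ η : V) :
    f ξ + ⟪∇ f ξ, η - ξ⟫ ≤ f η := by
  obtain ⟨z, hz, hmvt⟩ := domain_mvt (fun x _ => (hf x).hasFDerivAt.hasFDerivWithinAt)
    convex_univ (mem_univ ξ) (mem_univ η)
  rw [← inner_gradient_left] at hmvt
  rw [segment_eq_image'] at hz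
  obtain ⟨s, ⟨hs, -⟩, rfl⟩ := hz
  rcases hs.eq_or_lt with rfl | hs
  · simp only [zero_smul, add_zero] at hmvt
    linarith
  · have hscaled := hmono ξ (ξ + s • (η - ξ))
    rw [add_sub_cancel_left, inner_smul_right, inner_sub_left] at hscaled
    linarith [nonneg_of_mul_nonneg_right hscaled hs]

lemma exists_le_of_gradient_eq_smul
    (hconv : ∀ ξ η, f ξ + ⟪∇ f ξ, η - ξ⟫ ≤ f η) {v : V} (hv : v ≠ 0) {z : ℝ → V}
    (hz : ∀ t, ∇ f (z t) = t • v) (E : ℝ) : ∃ t, 0 < t ∧ E ≤ f (z t) := by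
  by_contra! hlt
  set C := ⟪v, z 1⟫ + (E - f (z 1))
  have hinner : ∀ t, 0 < t → ⟪v, z t⟫ ≤ C := by
    intro t ht
    have htangent := hconv (z 1) (z t)
    rw [hz, one_smul, inner_sub_right] at htangent
    linarith [hlt t ht]
  have hmin : ∀ t, f (z 0) ≤ f (z t) := by
    intro t
    simpa [hz] using hconv (z 0) (z t)
  obtain ⟨η, hη⟩ : ∃ η, ⟪v, η⟫ = C + 1 :=
    ⟨((C + 1) / ‖v‖ ^ 2) • v, by
      rw [inner_smul_right, real_inner_self_eq_norm_sq,
        div_mul_cancel₀ _ (pow_ne_zero 2 (norm_ne_zero_iff.mpr hv))]⟩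
  -- The tangent planes of `f` at the points `z t`, evaluated at the fixed point `η`,
  -- would grow without bound.
  have hgrow : ∀ t, 0 < t → f (z 0) + t ≤ f η := by
    intro t ht
    calc f (z 0) + t = f (z 0) + t * (C + 1 - C) := by ring
      _ ≤ f (z t) + t * (⟪v, η⟫ - ⟪v, z t⟫) := by
        rw [hη]; gcongr; exacts [hmin t, hinner t ht]
      _ = f (z t) + ⟪∇ f (z t), η - z t⟫ := by
        rw [hz, real_inner_smul_left, inner_sub_right]
      _ ≤ f η := hconv (z t) η
  linarith [hgrow (|f η - f (z 0)| + 1) (by positivity), le_abs_self (f η - f (z 0))]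

end Gradient

/-- Hyperconvexity of a function: its second derivative is bounded below by a positive multiple of
the squared norm, uniformly in the base point. This is the condition imposed on each fibre of a
Hamilton function; the constant may depend on the fibre. -/
def Hyperconvex {V : Type*} [NormedAddCommGroup V] [NormedSpace ℝ V] (f : V → ℝ) : Prop :=
  ∃ α : ℝ, 0 < α ∧ ∀ ξ v : V, α * ‖v‖ ^ 2 ≤ iteratedFDeriv ℝ 2 f ξ ![v, v]

namespace Hyperconvex

variable {V : Type*} [NormedAddCommGroup V] [InnerProductSpace ℝ V] [CompleteSpace V]
  {f : V → ℝ} {ξ : V → V}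

lemma inner_fderiv_gradient_pos (hconv : Hyperconvex f) (hf : ContDiff ℝ 2 f) (η : V) {v : V}
    (hv : v ≠ 0) : 0 < ⟪fderiv ℝ (∇ f) η v, v⟫ := by
  obtain ⟨α, hα, hbound⟩ := hconv
  rw [inner_fderiv_gradient hf]
  exact (mul_pos hα (pow_pos (norm_pos_iff.mpr hv) 2)).trans_le (hbound η v)

lemma isInvertible_fderiv_gradient (hconv : Hyperconvex f) (hf : ContDiff ℝ 2 f) (η : V) :
    (fderiv ℝ (∇ f) η).IsInvertible := by
  obtain ⟨α, hα, hbound⟩ := hconv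
  have hcoercive : IsCoercive (innerSL ℝ ∘L fderiv ℝ (∇ f) η) := by
    refine ⟨α, hα, fun v => ?_⟩
    calc α * ‖v‖ * ‖v‖ = α * ‖v‖ ^ 2 := by ring
      _ ≤ iteratedFDeriv ℝ 2 f η ![v, v] := hbound η v
      _ = ⟪fderiv ℝ (∇ f) η v, v⟫ := (inner_fderiv_gradient hf η v v).symm
  refine ⟨hcoercive.continuousLinearEquivOfBilin, ?_⟩
  ext v
  exact (hcoercive.unique_continuousLinearEquivOfBilin fun _ => rfl).symm

lemma inner_gradient_sub_pos (hconv : Hyperconvex f) (hf : ContDiff ℝ 2 f) {η ζ : V}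
    (hne : η ≠ ζ) : 0 < ⟪∇ f η - ∇ f ζ, η - ζ⟫ := by
  have hderiv : ∀ z, HasFDerivAt (fun z => ⟪η - ζ, ∇ f z⟫)
      (innerSL ℝ (η - ζ) ∘L fderiv ℝ (∇ f) z) z := fun z =>
    (innerSL ℝ (η - ζ)).hasFDerivAt.comp z (differentiable_gradient hf z).hasFDerivAt
  obtain ⟨z, -, hmvt⟩ := domain_mvt (fun z _ => (hderiv z).hasFDerivWithinAt)
    convex_univ (mem_univ ζ) (mem_univ η)
  calc 0 < ⟪fderiv ℝ (∇ f) z (η - ζ), η - ζ⟫ :=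
        hconv.inner_fderiv_gradient_pos hf z (sub_ne_zero.mpr hne)
    _ = ⟪∇ f η - ∇ f ζ, η - ζ⟫ := by
        rw [real_inner_comm, real_inner_comm (η - ζ) (∇ f η - ∇ f ζ), inner_sub_right]
        exact hmvt.symm

lemma gradient_injective (hconv : Hyperconvex f) (hf : ContDiff ℝ 2 f) :
    Injective (∇ f) := by
  intro η ζ heq
  by_contra hne
  simpa [heq] using hconv.inner_gradient_sub_pos hf hne

lemma deriv_energy_pos (hconv : Hyperconvex f) (hf : ContDiff ℝ 2 f)
    (hξ : RightInverse ξ (∇ f)) (hξd : Differentiable ℝ ξ) {v : V} (hv : v ≠ 0) {t : ℝ}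
    (ht : 0 < t) : 0 < deriv (fun s : ℝ => f (ξ (s • v))) t := by
  set z : ℝ → V := fun s => ξ (s • v)
  have hsmul : HasDerivAt (fun s : ℝ => s • v) v t := by
    simpa using (hasDerivAt_id t).smul_const v
  have hz : HasDerivAt z (deriv z t) t :=
    ((hξd (t • v)).comp t hsmul.differentiableAt).hasDerivAt
  have hhess : fderiv ℝ (∇ f) (z t) (deriv z t) = v := by
    have hcomp := (differentiable_gradient hf (z t)).hasFDerivAt.comp_hasDerivAt t hz
    have hgrad : ∇ f ∘ z = fun s => s • v := funext fun s => hξ (s • v)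
    rw [hgrad] at hcomp
    exact hcomp.unique hsmul
  have hz_ne : deriv z t ≠ 0 := by
    intro hzero
    exact hv (by rw [← hhess, hzero, map_zero])
  have henergy : HasDerivAt (fun s => f (z s)) (fderiv ℝ f (z t) (deriv z t)) t :=
    (hf.differentiable two_ne_zero (z t)).hasFDerivAt.comp_hasDerivAt t hz
  calc 0 < t * ⟪fderiv ℝ (∇ f) (z t) (deriv z t), deriv z t⟫ :=
        mul_pos ht (hconv.inner_fderiv_gradient_pos hf _ hz_ne)
    _ = ⟪∇ f (z t), deriv z t⟫ := by
        rw [hhess, hξ (t • v), real_inner_smul_left]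
    _ = deriv (fun s => f (z s)) t := by rw [inner_gradient_left, henergy.deriv]

lemma existsUnique_pos_energy_eq (hconv : Hyperconvex f) (hf : ContDiff ℝ 2 f)
    (hξ : RightInverse ξ (∇ f)) (hξd : Differentiable ℝ ξ) {E : ℝ} (hE : f (ξ 0) < E)
    {v : V} (hv : v ≠ 0) : ∃! t : ℝ, 0 < t ∧ f (ξ (t • v)) = E := by
  set e : ℝ → ℝ := fun t => f (ξ (t • v))
  have he0 : e 0 < E := by simpa only [e, zero_smul] using hE
  have hcont : Continuous e :=
    hf.continuous.comp (hξd.continuous.comp (continuous_id.smul continuous_const))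
  have hmono : StrictMonoOn e (Ici 0) :=
    strictMonoOn_of_deriv_pos (convex_Ici 0) hcont.continuousOn fun t ht =>
      hconv.deriv_energy_pos hf hξ hξd hv (by simpa only [interior_Ici, mem_Ioi] using ht)
  have htangent := add_inner_gradient_le (hf.differentiable two_ne_zero) fun η ζ => by
    rcases eq_or_ne ζ η with rfl | hne
    · simp
    · exact (hconv.inner_gradient_sub_pos hf hne).le
  obtain ⟨T, hT, hET⟩ := exists_le_of_gradient_eq_smul htangent hv (fun t => hξ (t • v)) E
  obtain ⟨t, ht, het⟩ := intermediate_value_Ioc hT.le hcont.continuousOn ⟨he0, hET⟩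
  refine ⟨t, ⟨ht.1, het⟩, fun s hs => ?_⟩
  exact hmono.injOn hs.1.le ht.1.le (hs.2.trans het.symm)

end Hyperconvex

lemma contDiff_two_fibre {X Y Z : Type*} [NormedAddCommGroup X] [NormedSpace ℝ X]
    [NormedAddCommGroup Y] [NormedSpace ℝ Y] [NormedAddCommGroup Z] [NormedSpace ℝ Z]
    {n : WithTop ℕ∞} (hn : n ≠ 0) {h : X → Y → Z} (hh : ContDiff ℝ (n + 1) (uncurry h)) (x : X) :
    ContDiff ℝ 2 (h x) :=
  (hh.comp (contDiff_prodMk_right x)).of_le (by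
    simpa [one_add_one_eq_two] using add_le_add_left (ENat.one_le_iff_ne_zero_withTop.mpr hn) 1)

section Family

variable {X V : Type*} [NormedAddCommGroup X] [NormedSpace ℝ X] [CompleteSpace X]
  [NormedAddCommGroup V] [InnerProductSpace ℝ V] [CompleteSpace V]
  {n : WithTop ℕ∞} {h : X → V → ℝ} {ξ : X → V → V}

lemma contDiff_of_rightInverse_gradient (hn : n ≠ 0) (hh : ContDiff ℝ (n + 1) (uncurry h))
    (hconv : ∀ x, Hyperconvex (h x)) (hξ : ∀ x, RightInverse (ξ x) (∇ (h x))) :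
    ContDiff ℝ n (uncurry ξ) := by
  have hfibre : ∀ x, ContDiff ℝ 2 (h x) := contDiff_two_fibre hn hh
  rw [contDiff_iff_contDiffAt]
  rintro ⟨x, v⟩
  let F : (X × V) × V → V := fun p => ∇ (h p.1.1) p.2 - p.1.2
  have hF : ContDiff ℝ n F :=
    ((contDiff_gradient_s6 hh).comp ((contDiff_fst.comp contDiff_fst).prodMk contDiff_snd)).sub
      (contDiff_snd.comp contDiff_fst)
  have hzero : F ((x, v), ξ x v) = 0 := sub_eq_zero.mpr (hξ x v)
  refine contDiffAt_of_eventually_unique_root hn (F := F) hF.contDiffAt ?_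
    (.of_forall fun p hp => ?_)
  · simpa only [F, fderiv_sub_const, uncurry] using
      (hconv x).isInvertible_fderiv_gradient (hfibre x) (ξ x v)
  · have hgrad : ∇ (h p.1.1) p.2 = p.1.2 := sub_eq_zero.mp (hp.trans hzero)
    exact (hconv p.1.1).gradient_injective (hfibre p.1.1) (hgrad.trans (hξ p.1.1 p.1.2).symm)

theorem stmt6_general (hn : n ≠ 0) (hh : ContDiff ℝ (n + 1) (uncurry h))
    (hconv : ∀ x, Hyperconvex (h x)) (hξ : ∀ x, RightInverse (ξ x) (∇ (h x))) (E : ℝ) :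
    ∃ lam : X → V → ℝ,
      (∀ x, h x (ξ x 0) < E → ∀ v, v ≠ 0 →
        0 < lam x v ∧ h x (ξ x (lam x v • v)) = E ∧
        ∀ t : ℝ, 0 < t → h x (ξ x (t • v)) = E → t = lam x v) ∧
      ContDiffOn ℝ n (fun p : X × V => lam p.1 p.2)
        ({x | h x (ξ x 0) < E} ×ˢ {v | v ≠ 0}) ∧
      ∀ x, h x (ξ x 0) < E → ∀ v, v ≠ 0 → ∀ c : ℝ, 0 < c → lam x (c • v) = c⁻¹ * lam x v := by
  have hfibre : ∀ x, ContDiff ℝ 2 (h x) := contDiff_two_fibre hn hh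
  have hξn : ContDiff ℝ n (uncurry ξ) := contDiff_of_rightInverse_gradient hn hh hconv hξ
  have hξd : ∀ x, Differentiable ℝ (ξ x) := fun x =>
    (hξn.comp (contDiff_prodMk_right x)).differentiable hn
  have henergy : ContDiff ℝ n fun p : X × V => h p.1 (ξ p.1 p.2) :=
    (hh.of_le le_self_add).comp (contDiff_fst.prodMk hξn)
  choose! lam hlam hunique using fun x (hx : h x (ξ x 0) < E) v (hv : v ≠ 0) =>
    (hconv x).existsUnique_pos_energy_eq (hfibre x) (hξ x) (hξd x) hx hv
  refine ⟨lam, fun x hx v hv => ⟨(hlam x hx v hv).1, (hlam x hx v hv).2,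
    fun t ht hE => hunique x hx v hv t ⟨ht, hE⟩⟩, ?_, fun x hx v hv c hc => ?_⟩
  · have hopen : IsOpen ({x | h x (ξ x 0) < E} ×ˢ {v : V | v ≠ 0}) :=
      (isOpen_lt (henergy.continuous.comp (.prodMk_left 0)) continuous_const).prod isOpen_ne
    have hscaled : ContDiff ℝ n fun p : (X × V) × ℝ => h p.1.1 (ξ p.1.1 (p.2 • p.1.2)) :=
      henergy.comp ((contDiff_fst.comp contDiff_fst).prodMk
        (contDiff_snd.smul (contDiff_snd.comp contDiff_fst)))
    exact contDiffOn_of_unique_pos_root hn hscaled hopen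
      (fun p hp => (hlam p.1 hp.1 p.2 hp.2).1) (fun p hp => (hlam p.1 hp.1 p.2 hp.2).2)
      (fun p hp t ht hE => hunique p.1 hp.1 p.2 hp.2 t ⟨ht, hE⟩)
      (fun p hp => ((hconv p.1).deriv_energy_pos (hfibre p.1) (hξ p.1) (hξd p.1) hp.2
        (hlam p.1 hp.1 p.2 hp.2).1).ne')
  · obtain ⟨hpos, hE⟩ := hlam x hx v hv
    refine (hunique x hx (c • v) (smul_ne_zero hc.ne' hv) _ ⟨by positivity, ?_⟩).symm
    rwa [smul_smul, mul_right_comm, inv_mul_cancel₀ hc.ne', one_mul]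

end Family

/-- Theorem 2.10 (i): for a smooth Hamilton function `h`, hyperconvex and even in each
fibre, with `h(·,0)` bounded above, and for every energy `E`, there is a unique positive
function `λ(x,v)` on `M̃ × (ℝ^d \ {0})`, `M̃ = {h(x,0) < E}`, with
`h(x, ξ_h(x, λ(x,v) v)) = E`; it is smooth and satisfies `λ(x,cv) = c⁻¹ λ(x,v)` for `c > 0`. -/
theorem stmt6 (d : ℕ) (h : Ed d → Ed d → ℝ)
    (hsmooth : ContDiff ℝ (⊤ : ℕ∞) (fun p : Ed d × Ed d => h p.1 p.2))
    (hconv : ∀ x : Ed d, ∃ α : ℝ, 0 < α ∧ ∀ ξ v : Ed d,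
      α * ‖v‖ ^ 2 ≤ iteratedFDeriv ℝ 2 (h x) ξ ![v, v])
    (heven : ∀ x ξ : Ed d, h x ξ = h x (-ξ))
    (hbdd : ∃ K : ℝ, ∀ x : Ed d, h x 0 ≤ K)
    (ξh : Ed d → Ed d → Ed d)
    (hξh1 : ∀ x v : Ed d, gradient (h x) (ξh x v) = v)
    (hξh2 : ∀ x ξ : Ed d, ξh x (gradient (h x) ξ) = ξ)
    (E : ℝ) :
    ∃ lam : Ed d → Ed d → ℝ,
      (∀ x : Ed d, h x 0 < E → ∀ v : Ed d, v ≠ 0 →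
        0 < lam x v ∧ h x (ξh x (lam x v • v)) = E ∧
        (∀ t : ℝ, 0 < t → h x (ξh x (t • v)) = E → t = lam x v)) ∧
      ContDiffOn ℝ (⊤ : ℕ∞) (fun p : Ed d × Ed d => lam p.1 p.2)
        ({x : Ed d | h x 0 < E} ×ˢ {v : Ed d | v ≠ 0}) ∧
      (∀ x : Ed d, h x 0 < E → ∀ v : Ed d, v ≠ 0 → ∀ c : ℝ, 0 < c →
        lam x (c • v) = c⁻¹ * lam x v) := by
  have hξ0 : ∀ x, ξh x 0 = 0 := fun x => by
    simpa only [gradient_zero_of_even fun ξ => (heven x ξ).symm] using hξh2 x 0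
  simpa only [hξ0] using stmt6_general (by simp) (by simpa) hconv hξh1 E
end
end

section
/- Let h ∈ C^∞(ℝ^d × ℝ^d, ℝ) be hyperconvex and even in each fibre with h(·,0) bounded from above, fix E ∈ ℝ, M̃ := {x : h(x,0) < E}, ξ_h(x,·) := (∇_ξ h(x,·))^{-1}, λ(x,v) the unique positive number with h(x, ξ_h(x, λ(x,v)v)) = E, and ℓ(x,v) := ξ_h(x, λ(x,v)v)·v for v ≠ 0. Then for every x ∈ M̃ and v ∈ ℝ^d \ {0}, the bilinear form g_{(x,v)}(w,w′) := D²_v ((1/2) ℓ(x,·)²)|_v (w,w′) (the second derivative in the fibre variable of (1/2)ℓ² at v) is positive definite: g_{(x,v)}(w,w) > 0 for all w ≠ 0. -/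
open scoped RealInnerProductSpace Classical
noncomputable section

/-!
In a fixed fibre, `η v = ξ_h(x, λ(x,v)v)` is the point of the level set `{f = E}` of the convex
function `f = h(x,·)` at which the gradient is a positive multiple of `v`, so `ℓ` is the support
function of the sublevel set. Since `(η v, s v)`, with `s = 1/λ`, solves `s • ∇f(η) = v`,
`f(η) = E`, whose linearization is a bordered Hessian, the inverse function theorem makes `η` and
`s` differentiable. Differentiating `f(η) = E` gives `⟪v, Dη w⟫ = 0`, hence `∇ℓ = η` and
`D²(ℓ²/2)(w,w) = ⟪η, w⟫² + ℓ ⟪Dη w, w⟫`, while differentiating `s • ∇f(η) = v` gives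
`⟪Dη w, w⟫ = s D²f(η)(Dη w, Dη w)`. The second summand vanishes only if `Dη w = 0`, in which case
`w` is a nonzero multiple of `v` and the first summand is positive because `ℓ(v) > 0`.
-/

open InnerProductSpace
open scoped Topology

section Convexity

variable {F : Type*} [NormedAddCommGroup F] [NormedSpace ℝ F] {f : F → ℝ}

theorem fderiv_apply_sub_lt_sub (hf : ContDiff ℝ 2 f)
    (hpos : ∀ p u, u ≠ 0 → 0 < fderiv ℝ (fderiv ℝ f) p u u) {p q : F} (hpq : p ≠ q) :
    fderiv ℝ f p (q - p) < f q - f p := by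
  set u := q - p with hu
  have hu0 : u ≠ 0 := sub_ne_zero.2 hpq.symm
  have hline (t : ℝ) : HasDerivAt (fun t : ℝ => p + t • u) u t := by
    simpa only [id_eq, one_smul] using ((hasDerivAt_id t).smul_const u).const_add p
  have hderiv (t : ℝ) :
      HasDerivAt (fun t : ℝ => f (p + t • u)) (fderiv ℝ f (p + t • u) u) t :=
    (hf.differentiable two_ne_zero _).hasFDerivAt.comp_hasDerivAt t (hline t)
  have hderiv₂ (t : ℝ) : HasDerivAt (fun t : ℝ => fderiv ℝ f (p + t • u) u)
      (fderiv ℝ (fderiv ℝ f) (p + t • u) u u) t := by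
    have hdiff : Differentiable ℝ (fderiv ℝ f) :=
      (hf.fderiv_right (m := 1) le_rfl).differentiable one_ne_zero
    simpa using ((hdiff _).hasFDerivAt.comp_hasDerivAt t (hline t)).clm_apply
      (hasDerivAt_const t u)
  have hmono : StrictMono fun t : ℝ => fderiv ℝ f (p + t • u) u :=
    strictMono_of_deriv_pos fun t => (hderiv₂ t).deriv ▸ hpos _ u hu0
  obtain ⟨c, hc, hslope⟩ := exists_hasDerivAt_eq_slope (fun t : ℝ => f (p + t • u)) _
    zero_lt_one (fun t _ => (hderiv t).continuousAt.continuousWithinAt) fun t _ => hderiv t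
  calc fderiv ℝ f p u = fderiv ℝ f (p + (0 : ℝ) • u) u := by rw [zero_smul, add_zero]
    _ < fderiv ℝ f (p + c • u) u := hmono hc.1
    _ = f q - f p := by rw [hslope]; simp [hu]

theorem pos_of_isCoercive {B : F →L[ℝ] F →L[ℝ] ℝ} (hB : IsCoercive B) {u : F} (hu : u ≠ 0) :
    0 < B u u := by
  obtain ⟨C, hC, hBC⟩ := hB
  have := norm_pos_iff.2 hu
  exact (by positivity : 0 < C * ‖u‖ * ‖u‖).trans_le (hBC u)

theorem isCoercive_fderiv_fderiv {p : F} {α : ℝ} (hα : 0 < α)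
    (h : ∀ u, α * ‖u‖ ^ 2 ≤ iteratedFDeriv ℝ 2 f p ![u, u]) :
    IsCoercive (fderiv ℝ (fderiv ℝ f) p) :=
  ⟨α, hα, fun u => by simpa [iteratedFDeriv_two_apply, sq, mul_assoc] using h u⟩

end Convexity

section InverseGaussMap

variable {V : Type*} [NormedAddCommGroup V] [InnerProductSpace ℝ V]

section BorderedOperator

/-- The bordered operator `(u, r) ↦ (A u + r n, ⟪n, u⟫)` of an operator `A` and a vector `n`. For
`A` the Hessian of a Lagrangian and `n` the gradient of the constraint, this is the derivative of
the Lagrange multiplier system. -/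
def borderedOperator (A : V →L[ℝ] V) (n : V) : V × ℝ →L[ℝ] V × ℝ :=
  (A ∘L .fst ℝ V ℝ + (ContinuousLinearMap.snd ℝ V ℝ).smulRight n).prod
    (innerSL ℝ n ∘L .fst ℝ V ℝ)

theorem borderedOperator_apply (A : V →L[ℝ] V) (n u : V) (r : ℝ) :
    borderedOperator A n (u, r) = (A u + r • n, ⟪n, u⟫) :=
  rfl

theorem borderedOperator_bijective {A : V →L[ℝ] V} (hsurj : Function.Surjective A)
    (hpos : ∀ u ≠ 0, 0 < ⟪A u, u⟫) {n : V} (hn : n ≠ 0) :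
    Function.Bijective (borderedOperator A n) := by
  constructor
  · rw [injective_iff_map_eq_zero]
    rintro ⟨u, r⟩ hur
    obtain ⟨hAu, hnu⟩ := Prod.ext_iff.1 hur
    simp only [borderedOperator_apply, Prod.fst_zero, Prod.snd_zero] at hAu hnu
    have hu : u = 0 := by
      by_contra hu
      have : ⟪A u + r • n, u⟫ = ⟪A u, u⟫ := by
        rw [inner_add_left, real_inner_smul_left, hnu, mul_zero, add_zero]
      rw [hAu, inner_zero_left] at this
      exact (hpos u hu).ne this
    simpa [hu, hn] using hAu
  · rintro ⟨w, c⟩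
    obtain ⟨z, hz⟩ := hsurj w
    obtain ⟨m, hm⟩ := hsurj n
    -- `⟪n, m⟫ = ⟪n, A⁻¹ n⟫` is, up to sign, the Schur complement of `A` in the bordered operator.
    have hnm : ⟪n, m⟫ ≠ 0 := by
      rw [← hm]
      exact (hpos m fun hm0 => hn (by rw [← hm, hm0, map_zero])).ne'
    refine ⟨(z - ((⟪n, z⟫ - c) / ⟪n, m⟫) • m, (⟪n, z⟫ - c) / ⟪n, m⟫), ?_⟩
    rw [borderedOperator_apply, map_sub, map_smul, hz, hm, sub_add_cancel, inner_sub_right,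
      real_inner_smul_right, div_mul_cancel₀ _ hnm, sub_sub_cancel]

end BorderedOperator

variable [CompleteSpace V] {f : V → ℝ}

section Gradient

theorem inner_fderiv_gradient_s8 (f : V → ℝ) (p u w : V) :
    ⟪fderiv ℝ (gradient f) p u, w⟫ = fderiv ℝ (fderiv ℝ f) p u w := by
  let T : StrongDual ℝ V ≃L[ℝ] V := (toDual ℝ V).symm.toContinuousLinearEquiv
  have hT : fderiv ℝ (gradient f) p = T ∘L fderiv ℝ (fderiv ℝ f) p := T.comp_fderiv
  rw [hT]
  exact toDual_symm_apply

theorem iteratedFDeriv_two_apply_eq_inner (f : V → ℝ) (p u w : V) :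
    iteratedFDeriv ℝ 2 f p ![u, w] = ⟪fderiv ℝ (gradient f) p u, w⟫ := by
  rw [iteratedFDeriv_two_apply, inner_fderiv_gradient_s8]
  rfl

theorem contDiff_gradient_s8 {n m : WithTop ℕ∞} (hf : ContDiff ℝ n f) (hmn : m + 1 ≤ n) :
    ContDiff ℝ m (gradient f) :=
  let T : StrongDual ℝ V ≃L[ℝ] V := (toDual ℝ V).symm.toContinuousLinearEquiv
  T.contDiff.comp (hf.fderiv_right hmn)

theorem fderiv_gradient_surjective {p : V} (hf : IsCoercive (fderiv ℝ (fderiv ℝ f) p)) :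
    Function.Surjective (fderiv ℝ (gradient f) p) := by
  have hEquiv (u : V) : fderiv ℝ (gradient f) p u = hf.continuousLinearEquivOfBilin u :=
    hf.unique_continuousLinearEquivOfBilin (inner_fderiv_gradient_s8 f p u)
  rw [funext hEquiv]
  exact hf.continuousLinearEquivOfBilin.surjective

theorem hasGradientAt_half_mul_sq {ℓ : V → ℝ} {n v : V} (hℓ : HasGradientAt ℓ n v) :
    HasGradientAt (fun v' => (1 / 2) * ℓ v' ^ 2) (ℓ v • n) v := by
  refine ((hℓ.hasFDerivAt.pow 2).const_mul (1 / 2)).congr_fderiv ?_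
  ext u
  simp only [one_div, Nat.add_one_sub_one, pow_one, nsmul_eq_mul, Nat.cast_ofNat, smul_apply,
    toDual_apply_apply, smul_eq_mul, map_smul]
  ring

theorem iteratedFDeriv_two_half_mul_sq {ℓ : V → ℝ} {n : V → V} {v : V}
    (hℓ : ∀ᶠ y in 𝓝 v, HasGradientAt ℓ (n y) y) (hn : DifferentiableAt ℝ n v) (u w : V) :
    iteratedFDeriv ℝ 2 (fun v' => (1 / 2) * ℓ v' ^ 2) v ![u, w] =
      ℓ v * ⟪fderiv ℝ n v u, w⟫ + ⟪n v, u⟫ * ⟪n v, w⟫ := by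
  have hgrad : gradient (fun v' => (1 / 2) * ℓ v' ^ 2) =ᶠ[𝓝 v] fun y => ℓ y • n y :=
    hℓ.mono fun _ hy => (hasGradientAt_half_mul_sq hy).gradient
  have hderiv := hℓ.self_of_nhds.hasFDerivAt.fun_smul hn.hasFDerivAt
  rw [iteratedFDeriv_two_apply_eq_inner, hgrad.fderiv_eq, hderiv.fderiv]
  simp [inner_add_left, real_inner_smul_left]

end Gradient

section MultiplierMap

/-- The map `(p, a) ↦ (a ∇f(p), f(p))`. Its fibre over `(v, E)` consists of the solutions of the
Lagrange multiplier system for the critical points of `⟪v, ·⟫` on the level set `{f = E}`. -/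
def multiplierMap (f : V → ℝ) (x : V × ℝ) : V × ℝ :=
  (x.2 • gradient f x.1, f x.1)

theorem hasStrictFDerivAt_multiplierMap (hf : ContDiff ℝ 2 f) (p : V) (a : ℝ) :
    HasStrictFDerivAt (multiplierMap f)
      (borderedOperator (a • fderiv ℝ (gradient f) p) (gradient f p)) (p, a) := by
  have hgrad : HasStrictFDerivAt (gradient f) (fderiv ℝ (gradient f) p) p :=
    (contDiff_gradient_s8 (m := 1) hf le_rfl).contDiffAt.hasStrictFDerivAt one_ne_zero
  have hval : HasStrictFDerivAt f (innerSL ℝ (gradient f p)) p := by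
    have hdual : innerSL ℝ (gradient f p) = fderiv ℝ f p := by
      ext u
      exact inner_gradient_left
    rw [hdual]
    exact hf.contDiffAt.hasStrictFDerivAt two_ne_zero
  have hfst : HasStrictFDerivAt (Prod.fst : V × ℝ → V) (ContinuousLinearMap.fst ℝ V ℝ) (p, a) :=
    hasStrictFDerivAt_fst
  exact (hasStrictFDerivAt_snd.smul (hgrad.comp (p, a) hfst)).prodMk
    (hval.comp (p, a) hfst)

theorem borderedOperator_smul_fderiv_gradient_bijective {p n : V} {a : ℝ}
    (hf : IsCoercive (fderiv ℝ (fderiv ℝ f) p)) (ha : 0 < a) (hn : n ≠ 0) :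
    Function.Bijective (borderedOperator (a • fderiv ℝ (gradient f) p) n) := by
  refine borderedOperator_bijective ?_ (fun u hu => ?_) hn
  · exact (MulAction.surjective₀ ha.ne').comp (fderiv_gradient_surjective hf)
  · rw [smul_apply, real_inner_smul_left, inner_fderiv_gradient_s8]
    exact mul_pos ha (pos_of_isCoercive hf hu)

theorem injOn_multiplierMap (hf : ContDiff ℝ 2 f)
    (hpos : ∀ p u, u ≠ 0 → 0 < fderiv ℝ (fderiv ℝ f) p u u) :
    Set.InjOn (multiplierMap f) {x | 0 < x.2 ∧ gradient f x.1 ≠ 0} := by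
  rintro ⟨p, a⟩ ⟨ha, hp⟩ ⟨q, b⟩ ⟨hb, -⟩ hpq
  obtain ⟨hgrad, hval⟩ : a • gradient f p = b • gradient f q ∧ f p = f q := Prod.ext_iff.1 hpq
  obtain rfl : p = q := by
    by_contra hne
    have hlt {p q : V} (hne : p ≠ q) (hval : f p = f q) {a : ℝ} (ha : 0 < a) :
        ⟪a • gradient f p, q - p⟫ < 0 := by
      rw [real_inner_smul_left, inner_gradient_left]
      exact mul_neg_of_pos_of_neg ha (by simpa [hval] using fderiv_apply_sub_lt_sub hf hpos hne)
    have hp := hlt hne hval ha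
    have hq := hlt (Ne.symm hne) hval.symm hb
    rw [← hgrad, ← neg_sub q p, inner_neg_right] at hq
    linarith
  rw [smul_left_injective ℝ hp hgrad]

end MultiplierMap

/-- `η v` is the point of the level set `{f = E}` at which the gradient of `f` is a positive
multiple of `v`, and `s v` is the factor that rescales this gradient to `v`: on unit vectors, `η`
inverts the Gauss map of the level set. Nothing is required at `v = 0`. -/
structure IsInverseGaussMap (f : V → ℝ) (E : ℝ) (η : V → V) (s : V → ℝ) : Prop where
  pos : ∀ ⦃v⦄, v ≠ 0 → 0 < s v
  level : ∀ ⦃v⦄, v ≠ 0 → f (η v) = E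
  smul_gradient : ∀ ⦃v⦄, v ≠ 0 → s v • gradient f (η v) = v

namespace IsInverseGaussMap

variable {E : ℝ} {η : V → V} {s : V → ℝ} {v : V}

theorem of_rightInverse {ξ : V → V} (hξ : Function.RightInverse ξ (gradient f))
    {lam : V → ℝ} (hlam : ∀ v, v ≠ 0 → 0 < lam v ∧ f (ξ (lam v • v)) = E) :
    IsInverseGaussMap f E (fun v => ξ (lam v • v)) fun v => (lam v)⁻¹ where
  pos v hv := inv_pos.2 (hlam v hv).1
  level v hv := (hlam v hv).2
  smul_gradient v hv := by rw [hξ, inv_smul_smul₀ (hlam v hv).1.ne']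

theorem gradient_ne_zero (h : IsInverseGaussMap f E η s) (hv : v ≠ 0) :
    gradient f (η v) ≠ 0 := fun h0 =>
  hv (by rw [← h.smul_gradient hv, h0, smul_zero])

theorem inner_pos (h : IsInverseGaussMap f E η s) (hf : ContDiff ℝ 2 f)
    (hpos : ∀ p u, u ≠ 0 → 0 < fderiv ℝ (fderiv ℝ f) p u u) (hE : f 0 < E) (hv : v ≠ 0) :
    0 < ⟪η v, v⟫ := by
  have hη : η v ≠ 0 := fun h0 => hE.ne (by rw [← h.level hv, h0])
  have hlt : 0 < ⟪gradient f (η v), η v⟫ := by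
    have := fderiv_apply_sub_lt_sub hf hpos hη
    rw [zero_sub, map_neg, h.level hv] at this
    rw [inner_gradient_left]
    linarith
  calc 0 < s v * ⟪gradient f (η v), η v⟫ := mul_pos (h.pos hv) hlt
    _ = ⟪η v, v⟫ := by rw [← real_inner_smul_left, h.smul_gradient hv, real_inner_comm]

theorem differentiableAt_prodMk (h : IsInverseGaussMap f E η s) (hf : ContDiff ℝ 2 f)
    (hconv : ∀ p, IsCoercive (fderiv ℝ (fderiv ℝ f) p)) (hv : v ≠ 0) :
    DifferentiableAt ℝ (fun v => (η v, s v)) v := by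
  set U : Set (V × ℝ) := {x | 0 < x.2 ∧ gradient f x.1 ≠ 0}
  have hU : IsOpen U := (isOpen_lt continuous_const continuous_snd).inter
    (isOpen_ne_fun ((contDiff_gradient_s8 (m := 1) hf le_rfl).continuous.comp continuous_fst)
      continuous_const)
  have hinj : Set.InjOn (multiplierMap f) U :=
    injOn_multiplierMap hf fun p _ => pos_of_isCoercive (hconv p)
  have hmem {w : V} (hw : w ≠ 0) : (η w, s w) ∈ U := ⟨h.pos hw, h.gradient_ne_zero hw⟩
  have hvalue {w : V} (hw : w ≠ 0) : multiplierMap f (η w, s w) = (w, E) :=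
    Prod.ext (h.smul_gradient hw) (h.level hw)
  have hbij := borderedOperator_smul_fderiv_gradient_bijective (hconv (η v)) (h.pos hv)
    (h.gradient_ne_zero hv)
  let e : (V × ℝ) ≃L[ℝ] V × ℝ := .ofBijective _ (LinearMap.ker_eq_bot.2 hbij.1)
    (LinearMap.range_eq_top.2 hbij.2)
  -- By injectivity, `g (w, E) = (η w, s w)`, so no a priori continuity of `η` and `s` is needed.
  let g : V × ℝ → V × ℝ := Function.invFunOn (multiplierMap f) U
  have hg : HasStrictFDerivAt g (e.symm : V × ℝ →L[ℝ] V × ℝ) (v, E) := by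
    rw [← hvalue hv]
    refine HasStrictFDerivAt.to_local_left_inverse (f' := e)
      (hasStrictFDerivAt_multiplierMap hf (η v) (s v)) ?_
    filter_upwards [hU.mem_nhds (hmem hv)] using hinj.leftInvOn_invFunOn
  have hgdiff : DifferentiableAt ℝ (fun w => g (w, E)) v :=
    hg.differentiableAt.comp v (f := fun w => (w, E)) (by fun_prop)
  refine hgdiff.congr_of_eventuallyEq ?_
  filter_upwards [eventually_ne_nhds hv] with w hw
  rw [← hvalue hw]
  exact (hinj.leftInvOn_invFunOn (hmem hw)).symm

theorem inner_fderiv_eq_zero (h : IsInverseGaussMap f E η s) (hv : v ≠ 0)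
    (hf : DifferentiableAt ℝ f (η v)) (hη : DifferentiableAt ℝ η v) (w : V) :
    ⟪v, fderiv ℝ η v w⟫ = 0 := by
  have hconst : HasFDerivAt (f ∘ η) (0 : V →L[ℝ] ℝ) v :=
    (hasFDerivAt_const E v).congr_of_eventuallyEq
      ((eventually_ne_nhds hv).mono fun _ hy => h.level hy)
  have hchain := hf.hasFDerivAt.comp v hη.hasFDerivAt
  calc ⟪v, fderiv ℝ η v w⟫ = s v * fderiv ℝ f (η v) (fderiv ℝ η v w) := by
        rw [← inner_gradient_left, ← real_inner_smul_left, h.smul_gradient hv]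
    _ = 0 := by
      rw [← ContinuousLinearMap.comp_apply, hchain.unique hconst,
        zero_apply, mul_zero]

theorem hasGradientAt_inner (h : IsInverseGaussMap f E η s) (hv : v ≠ 0)
    (hf : DifferentiableAt ℝ f (η v)) (hη : DifferentiableAt ℝ η v) :
    HasGradientAt (fun v => ⟪η v, v⟫) (η v) v := by
  refine (hη.hasFDerivAt.inner ℝ (hasFDerivAt_id v)).congr_fderiv ?_
  ext w
  have := h.inner_fderiv_eq_zero hv hf hη w
  rw [real_inner_comm] at this
  simp [fderivInnerCLM_apply, this]

theorem smul_fderiv_gradient_add_smul (h : IsInverseGaussMap f E η s) (hv : v ≠ 0)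
    (hf : DifferentiableAt ℝ (gradient f) (η v)) (hη : DifferentiableAt ℝ η v)
    (hs : DifferentiableAt ℝ s v) (w : V) :
    s v • fderiv ℝ (gradient f) (η v) (fderiv ℝ η v w) + fderiv ℝ s v w • gradient f (η v)
      = w := by
  have hid : HasFDerivAt (fun v => s v • gradient f (η v)) (ContinuousLinearMap.id ℝ V) v :=
    (hasFDerivAt_id v).congr_of_eventuallyEq
      ((eventually_ne_nhds hv).mono fun _ hy => h.smul_gradient hy)
  have hprod := hs.hasFDerivAt.smul (hf.hasFDerivAt.comp v hη.hasFDerivAt)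
  exact DFunLike.congr_fun (hprod.unique hid) w

theorem inner_fderiv_self (h : IsInverseGaussMap f E η s) (hv : v ≠ 0) (hf : ContDiff ℝ 2 f)
    (hη : DifferentiableAt ℝ η v) (hs : DifferentiableAt ℝ s v) (w : V) :
    ⟪fderiv ℝ η v w, w⟫ =
      s v * fderiv ℝ (fderiv ℝ f) (η v) (fderiv ℝ η v w) (fderiv ℝ η v w) := by
  have hgrad : DifferentiableAt ℝ (gradient f) (η v) :=
    (contDiff_gradient_s8 (m := 1) hf le_rfl).differentiable one_ne_zero _
  have htangent : ⟪gradient f (η v), fderiv ℝ η v w⟫ = 0 := by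
    have := h.inner_fderiv_eq_zero hv (hf.differentiable two_ne_zero _) hη w
    nth_rw 1 [← h.smul_gradient hv] at this
    rw [real_inner_smul_left] at this
    exact (mul_eq_zero.1 this).resolve_left (h.pos hv).ne'
  rw [real_inner_comm]
  nth_rw 1 [← h.smul_fderiv_gradient_add_smul hv hgrad hη hs w]
  rw [inner_add_left, real_inner_smul_left, real_inner_smul_left, htangent, mul_zero, add_zero,
    inner_fderiv_gradient_s8]

theorem inner_ne_zero_of_fderiv_eq_zero (h : IsInverseGaussMap f E η s) (hv : v ≠ 0)
    (hf : DifferentiableAt ℝ (gradient f) (η v)) (hη : DifferentiableAt ℝ η v)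
    (hs : DifferentiableAt ℝ s v) (hηv : ⟪η v, v⟫ ≠ 0) {w : V} (hw : w ≠ 0)
    (hηw : fderiv ℝ η v w = 0) : ⟪η v, w⟫ ≠ 0 := by
  have hparallel : fderiv ℝ s v w • gradient f (η v) = w := by
    simpa [hηw] using h.smul_fderiv_gradient_add_smul hv hf hη hs w
  have hnormal : ⟪η v, gradient f (η v)⟫ ≠ 0 := fun h0 => hηv <| by
    nth_rw 2 [← h.smul_gradient hv]
    rw [real_inner_smul_right, h0, mul_zero]
  rw [← hparallel, real_inner_smul_right]
  exact mul_ne_zero (fun h0 => hw (by rw [← hparallel, h0, zero_smul])) hnormal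

end IsInverseGaussMap

theorem stmt8_general (hf : ContDiff ℝ 2 f) (hconv : ∀ p, IsCoercive (fderiv ℝ (fderiv ℝ f) p))
    {E : ℝ} (hE : f 0 < E) {η : V → V} {s : V → ℝ} (h : IsInverseGaussMap f E η s)
    {v : V} (hv : v ≠ 0) {w : V} (hw : w ≠ 0) :
    0 < iteratedFDeriv ℝ 2 (fun v' => (1 / 2) * ⟪η v', v'⟫ ^ 2) v ![w, w] := by
  have hpos (p u : V) (hu : u ≠ 0) : 0 < fderiv ℝ (fderiv ℝ f) p u u :=
    pos_of_isCoercive (hconv p) hu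
  have hη {y : V} (hy : y ≠ 0) : DifferentiableAt ℝ η y :=
    (h.differentiableAt_prodMk hf hconv hy).fst
  have hs : DifferentiableAt ℝ s v := (h.differentiableAt_prodMk hf hconv hv).snd
  have hℓ : ∀ᶠ y in 𝓝 v, HasGradientAt (fun v' => ⟪η v', v'⟫) (η y) y :=
    (eventually_ne_nhds hv).mono fun y hy =>
      h.hasGradientAt_inner hy (hf.differentiable two_ne_zero _) (hη hy)
  have hℓv : 0 < ⟪η v, v⟫ := h.inner_pos hf hpos hE hv
  rw [iteratedFDeriv_two_half_mul_sq hℓ (hη hv), h.inner_fderiv_self hv hf (hη hv) hs]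
  by_cases hηw : fderiv ℝ η v w = 0
  · have hgrad := (contDiff_gradient_s8 (m := 1) hf le_rfl).differentiable one_ne_zero (η v)
    have hne := h.inner_ne_zero_of_fderiv_eq_zero hv hgrad (hη hv) hs hℓv.ne' hw hηw
    simpa [hηw] using mul_self_pos.2 hne
  · exact add_pos_of_pos_of_nonneg (mul_pos hℓv (mul_pos (h.pos hv) (hpos _ _ hηw)))
      (mul_self_nonneg _)

end InverseGaussMap

/-- Theorem 2.10 (ii), positivity of the fundamental tensor: for the Finsler function
`ℓ(x,v) = ξ_h(x, λ(x,v)v)·v` of a hyperconvex, even Hamilton function `h` at energy `E`,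
the bilinear form `g_{(x,v)}(w,w) = D²_v((1/2)ℓ(x,·)²)|_v(w,w)` is positive definite for
all `x ∈ M̃ = {h(x,0) < E}` and `v ≠ 0`. -/
theorem stmt8 (d : ℕ) (h : Ed d → Ed d → ℝ)
    (hsmooth : ContDiff ℝ (⊤ : ℕ∞) (fun p : Ed d × Ed d => h p.1 p.2))
    (hconv : ∀ x : Ed d, ∃ α : ℝ, 0 < α ∧ ∀ ξ v : Ed d,
      α * ‖v‖ ^ 2 ≤ iteratedFDeriv ℝ 2 (h x) ξ ![v, v])
    (heven : ∀ x ξ : Ed d, h x ξ = h x (-ξ))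
    (hbdd : ∃ K : ℝ, ∀ x : Ed d, h x 0 ≤ K)
    (ξh : Ed d → Ed d → Ed d)
    (hξh1 : ∀ x v : Ed d, gradient (h x) (ξh x v) = v)
    (hξh2 : ∀ x ξ : Ed d, ξh x (gradient (h x) ξ) = ξ)
    (E : ℝ)
    (lam : Ed d → Ed d → ℝ)
    (hlam : ∀ x : Ed d, h x 0 < E → ∀ v : Ed d, v ≠ 0 →
      0 < lam x v ∧ h x (ξh x (lam x v • v)) = E)
    (ℓ : Ed d → Ed d → ℝ)
    (hℓ : ∀ x v : Ed d, ℓ x v = if v = 0 then 0 else ⟪ξh x (lam x v • v), v⟫) :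
    ∀ x : Ed d, h x 0 < E → ∀ v : Ed d, v ≠ 0 → ∀ w : Ed d, w ≠ 0 →
      0 < iteratedFDeriv ℝ 2 (fun v' : Ed d => (1/2) * (ℓ x v') ^ 2) v ![w, w] := by
  intro x hx v hv w hw
  obtain ⟨α, hα, hc⟩ := hconv x
  have hsupp : ℓ x = fun v => ⟪ξh x (lam x v • v), v⟫ := by
    ext v
    by_cases hv : v = 0 <;> simp [hℓ, hv]
  rw [hsupp]
  have hfx : ContDiff ℝ (⊤ : ℕ∞) (h x) := hsmooth.comp (contDiff_const.prodMk contDiff_id)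
  exact stmt8_general (hfx.of_le (by norm_cast)) (fun p => isCoercive_fderiv_fderiv hα (hc p)) hx
    (IsInverseGaussMap.of_rightInverse (hξh1 x) (hlam x hx)) hv hw
end
end

section
/- Let h ∈ C^∞(ℝ^d × ℝ^d, ℝ) be hyperconvex and even in each fibre with h(·,0) bounded from above, fix E ∈ ℝ, M̃ := {x : h(x,0) < E}, and let ℓ = ℓ_{h,E} be the associated Finsler function: ℓ(x,v) := ξ_h(x, λ(x,v)v)·v where ξ_h(x,·) := (∇_ξ h(x,·))^{-1} and λ(x,v) > 0 is the unique number with h(x, ξ_h(x, λ(x,v)v)) = E. Let γ₀ : [a,b] → M̃ and ξ₀ : [a,b] → ℝ^d solve Hamilton's equations γ̇₀(t) = ∇_ξ h(γ₀(t), ξ₀(t)), ξ̇₀(t) = −∇_x h(γ₀(t), ξ₀(t)), with h(γ₀(t), ξ₀(t)) = E for all t. Then γ₀ is a geodesic of ℓ in the sense of vanishing first variation: for every δ > 0 and every C² map Γ : [a,b] × (−δ,δ) → M̃ with Γ(t,0) = γ₀(t) for all t, Γ(a,u) = γ₀(a) and Γ(b,u) = γ₀(b) for all u, and ∂_t Γ(t,u)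 ≠ 0 everywhere, the function u ↦ ∫_a^b ℓ(Γ(t,u), ∂_t Γ(t,u)) dt is differentiable at u = 0 with derivative 0. -/
open scoped RealInnerProductSpace Classical
noncomputable section

/-!
Pull the canonical one-form `ξ·dx` back along `(Γ, X)`, where `X(t, u)` is the momentum of energy
`E` corresponding to the velocity `∂ₜΓ`, so that the length integrand is `⟪X, ∂ₜΓ⟫`. By symmetry of
second derivatives, `∂ᵤ⟪X, ∂ₜΓ⟫ - ∂ₜ⟪X, ∂ᵤΓ⟫ = ⟪∂ᵤX, ∂ₜΓ⟫ - ⟪∂ₜX, ∂ᵤΓ⟫`, and along a solution of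
Hamilton's equations the right-hand side is the `u`-derivative of `h(Γ, X) = E`, hence zero. The
first variation is therefore the boundary term `⟪X, ∂ᵤΓ⟫`, which vanishes for fixed endpoints.
That `X` is continuously differentiable follows from the implicit function theorem, because by
coercivity of the fibre Hessian the energy is strictly increasing along velocity rays.
-/

open scoped Topology

section ImplicitFunction

variable {E F G : Type*} [NormedAddCommGroup E] [NormedSpace ℝ E] [CompleteSpace E]
  [NormedAddCommGroup F] [NormedSpace ℝ F] [CompleteSpace F]
  [NormedAddCommGroup G] [NormedSpace ℝ G] [CompleteSpace G]

theorem contDiffAt_of_eventually_unique_solution {n : WithTop ℕ∞} {f : E × F → G} {φ : E → F}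
    {x : E} {L : F ≃L[ℝ] G} {U : Set F} (hn : n ≠ 0) (hf : ContDiffAt ℝ n f (x, φ x))
    (hL : HasFDerivAt (fun y => f (x, y)) (L : F →L[ℝ] G) (φ x)) (hU : U ∈ 𝓝 (φ x))
    (hunique : ∀ᶠ z in 𝓝 x, ∀ y ∈ U, f (z, y) = f (x, φ x) → y = φ z) :
    ContDiffAt ℝ n φ x := by
  have hpartial : fderiv ℝ f (x, φ x) ∘L .inr ℝ E F = L :=
    ((hf.differentiableAt hn).hasFDerivAt.comp (φ x) (hasFDerivAt_prodMk_right x (φ x))).unique hL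
  have hinv : (fderiv ℝ f (x, φ x) ∘L .inr ℝ E F).IsInvertible := ⟨L, hpartial.symm⟩
  have hsmooth := hf.contDiffAt_implicitFunction hn hinv
  have hmem : ∀ᶠ z in 𝓝 x, hf.implicitFunction hn hinv z ∈ U :=
    hsmooth.continuousAt.eventually_mem (by rwa [hf.implicitFunction_apply_self hn hinv])
  refine hsmooth.congr_of_eventuallyEq ?_
  filter_upwards [hunique, hmem, hf.eventually_apply_implicitFunction hn hinv] with z hz hzU hfz
  exact (hz _ hzU hfz).symm

end ImplicitFunction

section LegendreTransform

variable {V : Type*} [NormedAddCommGroup V] [InnerProductSpace ℝ V]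

theorem isCoercive_fderiv_fderiv_s9 {f : V → ℝ} {ξ : V} {α : ℝ} (hα : 0 < α)
    (hf : ∀ v, α * ‖v‖ ^ 2 ≤ iteratedFDeriv ℝ 2 f ξ ![v, v]) :
    IsCoercive (fderiv ℝ (fderiv ℝ f) ξ) := by
  refine ⟨α, hα, fun v => ?_⟩
  simpa [iteratedFDeriv_two_apply, sq, mul_assoc] using hf v

variable [CompleteSpace V]

theorem hasFDerivAt_gradient {f : V → ℝ} {ξ : V} (hf : DifferentiableAt ℝ (fderiv ℝ f) ξ)
    (hcoer : IsCoercive (fderiv ℝ (fderiv ℝ f) ξ)) :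
    HasFDerivAt (gradient f) (hcoer.continuousLinearEquivOfBilin : V →L[ℝ] V) ξ := by
  have hgrad : HasFDerivAt (gradient f) _ ξ :=
    (InnerProductSpace.toDual ℝ V).symm.toContinuousLinearEquiv.hasFDerivAt.comp ξ hf.hasFDerivAt
  convert hgrad using 1
  ext v
  refine (hcoer.unique_continuousLinearEquivOfBilin fun w => ?_).symm
  exact InnerProductSpace.toDual_symm_apply

theorem inner_symm_continuousLinearEquivOfBilin_pos {B : V →L[ℝ] V →L[ℝ] ℝ}
    (hB : IsCoercive B) {v : V} (hv : v ≠ 0) :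
    0 < ⟪v, hB.continuousLinearEquivOfBilin.symm v⟫ := by
  set w := hB.continuousLinearEquivOfBilin.symm v with hw
  have hw0 : 0 < ‖w‖ := norm_pos_iff.2 (by simpa [hw] using hv)
  have ⟨α, hα, hαB⟩ := hB
  calc 0 < α * ‖w‖ * ‖w‖ := by positivity
    _ ≤ B w w := hαB w
    _ = ⟪v, w⟫ := by rw [← hB.continuousLinearEquivOfBilin_apply, hw,
      ContinuousLinearEquiv.apply_symm_apply]

variable {h : V → V → ℝ} {n : WithTop ℕ∞}

theorem contDiff_fibre_gradient (hh : ContDiff ℝ (n + 1) fun p : V × V => h p.1 p.2) :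
    ContDiff ℝ n fun p : V × V => gradient (h p.1) p.2 := by
  have hpartial (p : V × V) :
      fderiv ℝ (h p.1) p.2 = fderiv ℝ (fun p : V × V => h p.1 p.2) p ∘L .inr ℝ V V := by
    have hp := (hh.differentiable (by simp) (p.1, p.2)).hasFDerivAt
    exact (hp.comp p.2 (hasFDerivAt_prodMk_right p.1 p.2)).fderiv
  simp only [gradient, hpartial]
  exact (InnerProductSpace.toDual ℝ V).symm.contDiff.comp
    ((hh.fderiv_right le_rfl).clm_comp contDiff_const)

/-- `h` is a `C^(n+1)` Hamiltonian whose fibre derivative `∇_ξ h(x, ·)` is bijective with inverse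
`ξh x`, the fibrewise Legendre transform, and has everywhere coercive derivative. -/
structure IsHyperregular (n : WithTop ℕ∞) (h : V → V → ℝ) (ξh : V → V → V) : Prop where
  contDiff : ContDiff ℝ (n + 1) fun p : V × V => h p.1 p.2
  coercive : ∀ x ξ, IsCoercive (fderiv ℝ (fderiv ℝ (h x)) ξ)
  leftInverse : ∀ x, Function.LeftInverse (ξh x) (gradient (h x))
  rightInverse : ∀ x, Function.RightInverse (ξh x) (gradient (h x))

variable {ξh : V → V → V}

/-- The energy `h` at the momentum corresponding to the velocity `s • v`, as a function of the
scale `s`, for a tangent vector `z = (x, v)`. The Finsler scale `λ(x, v)` is the positive solution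
`s` of `rayEnergy h ξh (x, v) s = E`. -/
def rayEnergy (h : V → V → ℝ) (ξh : V → V → V) (z : V × V) (s : ℝ) : ℝ :=
  h z.1 (ξh z.1 (s • z.2))

/-- The momentum attached to a tangent vector `z = (x, v)` by the Finsler scale `lam`; the Finsler
function is `ℓ(x, v) = ⟪finslerMomentum ξh lam (x, v), v⟫`. -/
def finslerMomentum (ξh : V → V → V) (lam : V → V → ℝ) (z : V × V) : V :=
  ξh z.1 (lam z.1 z.2 • z.2)

namespace IsHyperregular

theorem of_le_iteratedFDeriv (hh : ContDiff ℝ (n + 1) fun p : V × V => h p.1 p.2)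
    (hconv : ∀ x ξ, ∃ α : ℝ, 0 < α ∧ ∀ v, α * ‖v‖ ^ 2 ≤ iteratedFDeriv ℝ 2 (h x) ξ ![v, v])
    (hleft : ∀ x, Function.LeftInverse (ξh x) (gradient (h x)))
    (hright : ∀ x, Function.RightInverse (ξh x) (gradient (h x))) : IsHyperregular n h ξh where
  contDiff := hh
  coercive x ξ :=
    have ⟨_, hα, hbound⟩ := hconv x ξ
    isCoercive_fderiv_fderiv_s9 hα hbound
  leftInverse := hleft
  rightInverse := hright

theorem contDiff_fibre (hh : IsHyperregular n h ξh) (x : V) : ContDiff ℝ (n + 1) (h x) :=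
  hh.contDiff.comp (contDiff_prodMk_right x)

theorem hasFDerivAt_fibre_gradient (hh : IsHyperregular n h ξh) (hn : n ≠ 0) (x ξ : V) :
    HasFDerivAt (gradient (h x))
      ((hh.coercive x ξ).continuousLinearEquivOfBilin : V →L[ℝ] V) ξ :=
  hasFDerivAt_gradient (((hh.contDiff_fibre x).fderiv_right le_rfl).differentiable hn ξ)
    (hh.coercive x ξ)

theorem contDiff_gradient_inverse (hh : IsHyperregular n h ξh) (hn : n ≠ 0) :
    ContDiff ℝ n fun p : V × V => ξh p.1 p.2 := by
  refine contDiff_iff_contDiffAt.2 fun p => ?_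
  let f : (V × V) × V → V := fun q => gradient (h q.1.1) q.2 - q.1.2
  have hf : ContDiff ℝ n f :=
    ((contDiff_fibre_gradient hh.contDiff).comp (by fun_prop : ContDiff ℝ n
      fun q : (V × V) × V => (q.1.1, q.2))).sub (by fun_prop)
  have hderiv := (hh.hasFDerivAt_fibre_gradient hn p.1 (ξh p.1 p.2)).sub_const p.2
  refine contDiffAt_of_eventually_unique_solution hn hf.contDiffAt hderiv Filter.univ_mem
    (.of_forall fun z ξ _ hξ => ?_)
  have hz : gradient (h z.1) ξ = z.2 := by simpa [f, hh.rightInverse p.1 p.2, sub_eq_zero] using hξ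
  rw [← hz, hh.leftInverse z.1 ξ]

theorem hasFDerivAt_gradient_inverse (hh : IsHyperregular n h ξh) (hn : n ≠ 0) (x v : V) :
    HasFDerivAt (ξh x)
      ((hh.coercive x (ξh x v)).continuousLinearEquivOfBilin.symm : V →L[ℝ] V) v := by
  have hcont : ContinuousAt (ξh x) v :=
    ((hh.contDiff_gradient_inverse hn).continuous.comp (.prodMk_right x)).continuousAt
  exact (hh.hasFDerivAt_fibre_gradient hn x (ξh x v)).of_local_left_inverse hcont
    (.of_forall (hh.rightInverse x))

theorem contDiff_rayEnergy (hh : IsHyperregular n h ξh) (hn : n ≠ 0) :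
    ContDiff ℝ n fun q : (V × V) × ℝ => rayEnergy h ξh q.1 q.2 := by
  have hmomentum : ContDiff ℝ n fun q : (V × V) × ℝ => ξh q.1.1 (q.2 • q.1.2) :=
    (hh.contDiff_gradient_inverse hn).comp
      (by fun_prop : ContDiff ℝ n fun q : (V × V) × ℝ => (q.1.1, q.2 • q.1.2))
  exact (hh.contDiff.of_le le_self_add).comp
    ((by fun_prop : ContDiff ℝ n fun q : (V × V) × ℝ => q.1.1).prodMk hmomentum)

theorem hasDerivAt_rayEnergy (hh : IsHyperregular n h ξh) (hn : n ≠ 0) (z : V × V) (s : ℝ) :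
    HasDerivAt (rayEnergy h ξh z)
      (s * ⟪z.2, (hh.coercive z.1 (ξh z.1 (s • z.2))).continuousLinearEquivOfBilin.symm z.2⟫)
      s := by
  have hray : HasDerivAt (fun s : ℝ => s • z.2) z.2 s := by
    simpa using (hasDerivAt_id s).smul_const z.2
  have hmomentum :=
    (hh.hasFDerivAt_gradient_inverse hn z.1 (s • z.2)).comp_hasDerivAt s hray
  have henergy := ((hh.contDiff_fibre z.1).differentiable (by simp)
    _).hasFDerivAt.comp_hasDerivAt s hmomentum
  rwa [← inner_gradient_left, Function.comp_apply, hh.rightInverse z.1,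
    real_inner_smul_left] at henergy

theorem strictMonoOn_rayEnergy (hh : IsHyperregular n h ξh) (hn : n ≠ 0) {z : V × V}
    (hz : z.2 ≠ 0) : StrictMonoOn (rayEnergy h ξh z) (Set.Ioi 0) := by
  have hderiv := hh.hasDerivAt_rayEnergy hn z
  refine strictMonoOn_of_deriv_pos (convex_Ioi 0)
    (fun s _ => (hderiv s).continuousAt.continuousWithinAt) fun s hs => ?_
  rw [(hderiv s).deriv]
  rw [interior_Ioi] at hs
  exact mul_pos hs (inner_symm_continuousLinearEquivOfBilin_pos _ hz)

theorem contDiffAt_of_rayEnergy_eq {lam : V × V → ℝ} {E : ℝ} {z₀ : V × V}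
    (hh : IsHyperregular n h ξh) (hn : n ≠ 0) (hz₀ : z₀.2 ≠ 0)
    (hlam : ∀ᶠ z in 𝓝 z₀, 0 < lam z ∧ rayEnergy h ξh z (lam z) = E) :
    ContDiffAt ℝ n lam z₀ := by
  obtain ⟨hpos₀, henergy₀⟩ := hlam.self_of_nhds
  have hslope := mul_pos hpos₀ (inner_symm_continuousLinearEquivOfBilin_pos
    (hh.coercive z₀.1 (ξh z₀.1 (lam z₀ • z₀.2))) hz₀)
  have hderiv := (hh.hasDerivAt_rayEnergy hn z₀ (lam z₀)).hasFDerivAt_equiv hslope.ne'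
  refine contDiffAt_of_eventually_unique_solution hn
    (hh.contDiff_rayEnergy hn).contDiffAt hderiv (Ioi_mem_nhds hpos₀) ?_
  filter_upwards [hlam, continuous_snd.continuousAt.eventually_ne hz₀] with z hz hz0 s hs hEs
  exact (hh.strictMonoOn_rayEnergy hn hz0).injOn hs hz.1
    (hEs.trans (henergy₀.trans hz.2.symm))

variable {lam : V → V → ℝ} {E : ℝ}

theorem contDiffAt_finslerMomentum {z₀ : V × V} (hh : IsHyperregular n h ξh) (hn : n ≠ 0)
    (hlam : ∀ x, h x 0 < E → ∀ v, v ≠ 0 → 0 < lam x v ∧ h x (ξh x (lam x v • v)) = E)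
    (hz₀E : h z₀.1 0 < E) (hz₀ : z₀.2 ≠ 0) : ContDiffAt ℝ n (finslerMomentum ξh lam) z₀ := by
  have hzero : Continuous fun z : V × V => h z.1 0 :=
    hh.contDiff.continuous.comp (f := fun z : V × V => (z.1, (0 : V))) (by fun_prop)
  have hscale : ContDiffAt ℝ n (fun z : V × V => lam z.1 z.2) z₀ := by
    refine hh.contDiffAt_of_rayEnergy_eq hn hz₀ (E := E) ?_
    filter_upwards [hzero.continuousAt.eventually_lt_const hz₀E,
      continuous_snd.continuousAt.eventually_ne hz₀] with z hzE hz
    exact hlam z.1 hzE z.2 hz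
  exact (hh.contDiff_gradient_inverse hn).contDiffAt.comp z₀
    (contDiffAt_fst.prodMk (hscale.smul contDiffAt_snd))

theorem finslerMomentum_gradient_eq {x ξ : V} (hh : IsHyperregular n h ξh) (hn : n ≠ 0)
    (hlam : ∀ v, v ≠ 0 → 0 < lam x v ∧ h x (ξh x (lam x v • v)) = E)
    (hξ : gradient (h x) ξ ≠ 0) (henergy : h x ξ = E) :
    finslerMomentum ξh lam (x, gradient (h x) ξ) = ξ := by
  obtain ⟨hpos, hscale⟩ := hlam _ hξ
  have hone : rayEnergy h ξh (x, gradient (h x) ξ) 1 = E := by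
    simp only [rayEnergy, one_smul, hh.leftInverse x ξ, henergy]
  have hlam_one : lam x (gradient (h x) ξ) = 1 :=
    (hh.strictMonoOn_rayEnergy hn (z := (x, gradient (h x) ξ)) hξ).injOn hpos
      (Set.mem_Ioi.2 one_pos) (hscale.trans hone.symm)
  rw [finslerMomentum, hlam_one, one_smul, hh.leftInverse x ξ]

end IsHyperregular

end LegendreTransform

section CanonicalForm

variable {A V : Type*} [NormedAddCommGroup A] [NormedSpace ℝ A] [NormedAddCommGroup V]
  [InnerProductSpace ℝ V] {Γ X : A → V} {S : Set A} {p : A}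

/-- The canonical one-form `ξ·dx` of the phase space `V × V`, pulled back along the map `(Γ, X)`
and evaluated at `q` on the vector `w`. Differentiating `Γ` within `S` keeps the form regular up to
the boundary of `S`. -/
def pullbackCanonicalForm (Γ X : A → V) (S : Set A) (w q : A) : ℝ :=
  ⟪X q, fderivWithin ℝ Γ S q w⟫

theorem contDiffOn_pullbackCanonicalForm {n : WithTop ℕ∞} (hS : UniqueDiffOn ℝ S)
    (hΓ : ContDiffOn ℝ (n + 1) Γ S) (hX : ContDiffOn ℝ n X S) (w : A) :
    ContDiffOn ℝ n (pullbackCanonicalForm Γ X S w) S :=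
  hX.inner ℝ ((hΓ.fderivWithin hS le_rfl).clm_apply contDiffOn_const)

theorem fderiv_pullbackCanonicalForm (hS : S ∈ 𝓝 p) (hΓ : ContDiffAt ℝ 2 Γ p)
    (hX : DifferentiableAt ℝ X p) (v w : A) :
    fderiv ℝ (pullbackCanonicalForm Γ X S v) p w =
      ⟪X p, fderiv ℝ (fderiv ℝ Γ) p w v⟫ + ⟪fderiv ℝ X p w, fderiv ℝ Γ p v⟫ := by
  have hinterior : pullbackCanonicalForm Γ X S v =ᶠ[𝓝 p] fun q => ⟪X q, fderiv ℝ Γ q v⟫ := by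
    filter_upwards [eventually_mem_nhds_iff.2 hS] with q hq
    rw [pullbackCanonicalForm, fderivWithin_of_mem_nhds hq]
  have hΓ' : DifferentiableAt ℝ (fderiv ℝ Γ) p :=
    (hΓ.fderiv_right (m := 1) (by norm_num)).differentiableAt one_ne_zero
  rw [hinterior.fderiv_eq, fderiv_inner_apply ℝ hX (hΓ'.clm_apply (differentiableAt_const v)),
    fderiv_clm_apply hΓ' (differentiableAt_const v)]
  simp

theorem fderiv_pullbackCanonicalForm_sub_swap (hS : S ∈ 𝓝 p) (hΓ : ContDiffAt ℝ 2 Γ p)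
    (hX : DifferentiableAt ℝ X p) (v w : A) :
    fderiv ℝ (pullbackCanonicalForm Γ X S v) p w - fderiv ℝ (pullbackCanonicalForm Γ X S w) p v =
      ⟪fderiv ℝ X p w, fderiv ℝ Γ p v⟫ - ⟪fderiv ℝ X p v, fderiv ℝ Γ p w⟫ := by
  have hsymm : fderiv ℝ (fderiv ℝ Γ) p w v = fderiv ℝ (fderiv ℝ Γ) p v w :=
    (hΓ.isSymmSndFDerivAt (by simp)).eq w v
  rw [fderiv_pullbackCanonicalForm hS hΓ hX, fderiv_pullbackCanonicalForm hS hΓ hX, hsymm]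
  ring

variable [CompleteSpace V] {h : V → V → ℝ}

theorem fderiv_hamiltonian_comp
    (hh : DifferentiableAt ℝ (fun z : V × V => h z.1 z.2) (Γ p, X p))
    (hΓ : DifferentiableAt ℝ Γ p) (hX : DifferentiableAt ℝ X p) (w : A) :
    fderiv ℝ (fun q => h (Γ q) (X q)) p w =
      ⟪gradient (fun x => h x (X p)) (Γ p), fderiv ℝ Γ p w⟫ +
        ⟪gradient (h (Γ p)) (X p), fderiv ℝ X p w⟫ := by
  set D := fderiv ℝ (fun z : V × V => h z.1 z.2) (Γ p, X p)
  have hbase : fderiv ℝ (fun x => h x (X p)) (Γ p) = D ∘L .inl ℝ V V :=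
    (hh.hasFDerivAt.comp (f := (·, X p)) (Γ p) (hasFDerivAt_prodMk_left (Γ p) (X p))).fderiv
  have hfibre : fderiv ℝ (h (Γ p)) (X p) = D ∘L .inr ℝ V V :=
    (hh.hasFDerivAt.comp (X p) (hasFDerivAt_prodMk_right (Γ p) (X p))).fderiv
  have hcomp : fderiv ℝ (fun q => h (Γ q) (X q)) p =
      D ∘L (fderiv ℝ Γ p).prod (fderiv ℝ X p) :=
    (hh.hasFDerivAt.comp (f := fun q => (Γ q, X q)) p
      (hΓ.hasFDerivAt.prodMk hX.hasFDerivAt)).fderiv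
  simp only [inner_gradient_left, hbase, hfibre, hcomp, ContinuousLinearMap.comp_apply,
    ContinuousLinearMap.prod_apply, ContinuousLinearMap.inl_apply, ContinuousLinearMap.inr_apply,
    ← map_add, Prod.mk_add_mk, add_zero, zero_add]

theorem fderiv_pullbackCanonicalForm_swap_of_hamilton (hS : S ∈ 𝓝 p)
    (hh : DifferentiableAt ℝ (fun z : V × V => h z.1 z.2) (Γ p, X p))
    (hΓ : ContDiffAt ℝ 2 Γ p) (hX : DifferentiableAt ℝ X p) {E : ℝ}
    (henergy : ∀ q ∈ S, h (Γ q) (X q) = E) {v : A}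
    (hvelocity : fderiv ℝ Γ p v = gradient (h (Γ p)) (X p))
    (hforce : fderiv ℝ X p v = -gradient (fun x => h x (X p)) (Γ p)) (w : A) :
    fderiv ℝ (pullbackCanonicalForm Γ X S v) p w =
      fderiv ℝ (pullbackCanonicalForm Γ X S w) p v := by
  have hconst : (fun q => h (Γ q) (X q)) =ᶠ[𝓝 p] fun _ => E := Filter.mem_of_superset hS henergy
  have hzero := fderiv_hamiltonian_comp hh (hΓ.differentiableAt two_ne_zero) hX w
  rw [hconst.fderiv_eq, fderiv_const_apply, zero_apply] at hzero
  have hswap := fderiv_pullbackCanonicalForm_sub_swap hS hΓ hX v w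
  rw [hvelocity, hforce, inner_neg_left, real_inner_comm] at hswap
  linarith

end CanonicalForm

section Slices

variable {F : Type*} [NormedAddCommGroup F] [NormedSpace ℝ F] {f : ℝ × ℝ → F}
  {f' : ℝ × ℝ →L[ℝ] F} {I U : Set ℝ} {t u : ℝ}

theorem hasDerivWithinAt_slice_fst (hf : HasFDerivWithinAt f f' (I ×ˢ U) (t, u)) (hu : u ∈ U) :
    HasDerivWithinAt (fun s => f (s, u)) (f' (1, 0)) I t := by
  have hline : HasDerivWithinAt (fun s : ℝ => (s, u)) ((1 : ℝ), (0 : ℝ)) I t :=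
    (hasDerivWithinAt_id t I).prodMk (hasDerivWithinAt_const t I u)
  exact HasFDerivWithinAt.comp_hasDerivWithinAt (f := fun s => (s, u)) t hf hline
    fun s hs => ⟨hs, hu⟩

theorem fderivWithin_apply_eq_deriv_slice_fst (hf : DifferentiableWithinAt ℝ f (I ×ˢ U) (t, u))
    (hI : UniqueDiffWithinAt ℝ I t) (hu : u ∈ U) (hderiv : deriv (fun s => f (s, u)) t ≠ 0) :
    fderivWithin ℝ f (I ×ˢ U) (t, u) (1, 0) = deriv (fun s => f (s, u)) t :=
  hI.eq_deriv _ (hasDerivWithinAt_slice_fst hf.hasFDerivWithinAt hu)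
    (differentiableAt_of_deriv_ne_zero hderiv).hasDerivAt.hasDerivWithinAt

theorem hasDerivAt_slice_fst (hf : HasFDerivAt f f' (t, u)) :
    HasDerivAt (fun s => f (s, u)) (f' (1, 0)) t := by
  simpa using hasDerivWithinAt_slice_fst (I := Set.univ) hf.hasFDerivWithinAt (Set.mem_univ u)

theorem hasDerivAt_slice_snd (hf : HasFDerivWithinAt f f' (I ×ˢ U) (t, u)) (ht : t ∈ I)
    (hU : U ∈ 𝓝 u) : HasDerivAt (fun v => f (t, v)) (f' (0, 1)) u := by
  have hline : HasDerivAt (fun v : ℝ => (t, v)) ((0 : ℝ), (1 : ℝ)) u :=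
    (hasDerivAt_const u t).prodMk (hasDerivAt_id u)
  refine HasFDerivWithinAt.comp_hasDerivAt (f := fun v => (t, v)) u hf hline ?_
  filter_upwards [hU] with v hv using ⟨ht, hv⟩

theorem hasDerivAt_integral_of_contDiffOn {a b : ℝ} (hab : a < b) (hU : IsOpen U) (hu : u ∈ U)
    (hf : ContDiffOn ℝ 1 f (Set.Icc a b ×ˢ U)) :
    HasDerivAt (fun v => ∫ t in a..b, f (t, v))
      (∫ t in a..b, fderivWithin ℝ f (Set.Icc a b ×ˢ U) (t, u) (0, 1)) u := by
  set S := Set.Icc a b ×ˢ U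
  have hpartial : ContinuousOn (fun p => fderivWithin ℝ f S p (0, 1)) S :=
    (hf.continuousOn_fderivWithin ((uniqueDiffOn_Icc hab).prod hU.uniqueDiffOn)
      le_rfl).clm_apply continuousOn_const
  have hslice {g : ℝ × ℝ → F} (hg : ContinuousOn g S) {v : ℝ} (hv : v ∈ U) :
      IntervalIntegrable (fun t => g (t, v)) MeasureTheory.volume a b := by
    refine (hg.comp (f := fun t => (t, v)) (by fun_prop) fun t ht => ?_).intervalIntegrable
    exact ⟨Set.uIcc_of_le hab.le ▸ ht, hv⟩
  have hIcc {t : ℝ} (ht : t ∈ Set.uIoc a b) : t ∈ Set.Icc a b :=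
    Set.Ioc_subset_Icc_self (Set.uIoc_of_le hab.le ▸ ht)
  obtain ⟨K, hK, huK, hKU⟩ := exists_compact_subset hU hu
  obtain ⟨C, hC⟩ := (isCompact_Icc.prod hK).exists_bound_of_continuousOn
    (hpartial.mono (Set.prod_mono_right hKU))
  refine (intervalIntegral.hasDerivAt_integral_of_dominated_loc_of_deriv_le
    (F := fun v t => f (t, v)) (F' := fun v t => fderivWithin ℝ f S (t, v) (0, 1))
    (bound := fun _ => C) (mem_interior_iff_mem_nhds.1 huK) ?_ (hslice hf.continuousOn hu)
    (hslice hpartial hu).aestronglyMeasurable_restrict_uIoc ?_ intervalIntegrable_const ?_).2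
  · filter_upwards [hU.mem_nhds hu] with v hv
    exact (hslice hf.continuousOn hv).aestronglyMeasurable_restrict_uIoc
  · exact .of_forall fun t ht v hv => hC (t, v) ⟨hIcc ht, hv⟩
  · refine .of_forall fun t ht v hv => ?_
    exact hasDerivAt_slice_snd (hf.differentiableOn one_ne_zero (t, v)
      ⟨hIcc ht, hKU hv⟩).hasFDerivWithinAt (hIcc ht) (hU.mem_nhds (hKU hv))

end Slices

section FirstVariation

variable {V : Type*} [NormedAddCommGroup V] [InnerProductSpace ℝ V] {Γ X : ℝ × ℝ → V}
  {a b u₀ : ℝ} {U : Set ℝ}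

theorem pullbackCanonicalForm_eq_zero_of_slice_eq {t : ℝ} {I : Set ℝ} (hU : U ∈ 𝓝 u₀) (ht : t ∈ I)
    (hΓ : DifferentiableWithinAt ℝ Γ (I ×ˢ U) (t, u₀)) (hfixed : ∀ u ∈ U, Γ (t, u) = Γ (t, u₀)) :
    pullbackCanonicalForm Γ X (I ×ˢ U) (0, 1) (t, u₀) = 0 := by
  have hconst : (fun u => Γ (t, u)) =ᶠ[𝓝 u₀] fun _ => Γ (t, u₀) :=
    Filter.mem_of_superset hU hfixed
  have hvariation : fderivWithin ℝ Γ (I ×ˢ U) (t, u₀) (0, 1) = 0 :=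
    (hasDerivAt_slice_snd hΓ.hasFDerivWithinAt ht hU).unique
      ((hasDerivAt_const u₀ _).congr_of_eventuallyEq hconst)
  rw [pullbackCanonicalForm, hvariation, inner_zero_right]

theorem hasDerivAt_integral_pullbackCanonicalForm_of_hamilton [CompleteSpace V] {h : V → V → ℝ}
    {E : ℝ} (hab : a < b) (hU : IsOpen U) (hu₀ : u₀ ∈ U)
    (hh : Differentiable ℝ fun z : V × V => h z.1 z.2)
    (hΓ : ContDiffOn ℝ 2 Γ (Set.Icc a b ×ˢ U)) (hX : ContDiffOn ℝ 1 X (Set.Icc a b ×ˢ U))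
    (henergy : ∀ q ∈ Set.Icc a b ×ˢ U, h (Γ q) (X q) = E)
    (hleft : ∀ u ∈ U, Γ (a, u) = Γ (a, u₀)) (hright : ∀ u ∈ U, Γ (b, u) = Γ (b, u₀))
    (hvelocity : ∀ t ∈ Set.Ioo a b,
      HasDerivAt (fun s => Γ (s, u₀)) (gradient (h (Γ (t, u₀))) (X (t, u₀))) t)
    (hforce : ∀ t ∈ Set.Ioo a b,
      HasDerivAt (fun s => X (s, u₀)) (-gradient (fun x => h x (X (t, u₀))) (Γ (t, u₀))) t) :
    HasDerivAt
      (fun u => ∫ t in a..b, pullbackCanonicalForm Γ X (Set.Icc a b ×ˢ U) (1, 0) (t, u)) 0 u₀ := by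
  set S := Set.Icc a b ×ˢ U
  have hform (w : ℝ × ℝ) : ContDiffOn ℝ 1 (pullbackCanonicalForm Γ X S w) S :=
    contDiffOn_pullbackCanonicalForm ((uniqueDiffOn_Icc hab).prod hU.uniqueDiffOn) hΓ hX w
  have hswap : Set.EqOn
      (fun t => fderivWithin ℝ (pullbackCanonicalForm Γ X S (1, 0)) S (t, u₀) (0, 1))
      (deriv fun t => pullbackCanonicalForm Γ X S (0, 1) (t, u₀)) (Set.Ioo a b) := by
    intro t ht
    have hS : S ∈ 𝓝 (t, u₀) := prod_mem_nhds (Icc_mem_nhds ht.1 ht.2) (hU.mem_nhds hu₀)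
    have hΓt := hΓ.contDiffAt hS
    have hXt := (hX.contDiffAt hS).differentiableAt one_ne_zero
    have hformt := ((hform (0, 1)).contDiffAt hS).differentiableAt one_ne_zero
    have hΓ₀ := hasDerivAt_slice_fst (hΓt.differentiableAt two_ne_zero).hasFDerivAt
    have hX₀ := hasDerivAt_slice_fst hXt.hasFDerivAt
    simp only [fderivWithin_of_mem_nhds hS, (hasDerivAt_slice_fst hformt.hasFDerivAt).deriv]
    exact fderiv_pullbackCanonicalForm_swap_of_hamilton hS (hh _) hΓt hXt henergy
      (hΓ₀.unique (hvelocity t ht)) (hX₀.unique (hforce t ht)) (0, 1)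
  have hboundary : ContDiffOn ℝ 1 (fun t => pullbackCanonicalForm Γ X S (0, 1) (t, u₀))
      (Set.Icc a b) :=
    (hform (0, 1)).comp (f := fun t => (t, u₀)) (by fun_prop) fun t ht => ⟨ht, hu₀⟩
  have hendpoint {t : ℝ} (ht : t ∈ Set.Icc a b) (hfixed : ∀ u ∈ U, Γ (t, u) = Γ (t, u₀)) :
      pullbackCanonicalForm Γ X S (0, 1) (t, u₀) = 0 :=
    pullbackCanonicalForm_eq_zero_of_slice_eq (hU.mem_nhds hu₀) ht
      (hΓ.differentiableOn two_ne_zero _ ⟨ht, hu₀⟩) hfixed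
  have hzero : ∫ t in a..b,
      fderivWithin ℝ (pullbackCanonicalForm Γ X S (1, 0)) S (t, u₀) (0, 1) = 0 := by
    rw [intervalIntegral.integral_congr_Ioo_of_le hab.le hswap,
      intervalIntegral.integral_deriv_of_contDiffOn_Icc hboundary hab.le,
      hendpoint (Set.right_mem_Icc.2 hab.le) hright, hendpoint (Set.left_mem_Icc.2 hab.le) hleft,
      sub_zero]
  exact (hasDerivAt_integral_of_contDiffOn hab hU hu₀ (hform (1, 0))).congr_deriv hzero

theorem IsHyperregular.hasDerivAt_integral_inner_finslerMomentum [CompleteSpace V]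
    {h : V → V → ℝ} {ξh : V → V → V} {lam : V → V → ℝ} {E : ℝ} {ξ₀ : ℝ → V}
    (hh : IsHyperregular 1 h ξh)
    (hlam : ∀ x, h x 0 < E → ∀ v, v ≠ 0 → 0 < lam x v ∧ h x (ξh x (lam x v • v)) = E)
    (hab : a < b) (hU : IsOpen U) (hu₀ : u₀ ∈ U) (hΓ : ContDiffOn ℝ 2 Γ (Set.Icc a b ×ˢ U))
    (hdomain : ∀ q ∈ Set.Icc a b ×ˢ U, h (Γ q) 0 < E)
    (hregular : ∀ q ∈ Set.Icc a b ×ˢ U, fderivWithin ℝ Γ (Set.Icc a b ×ˢ U) q (1, 0) ≠ 0)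
    (hleft : ∀ u ∈ U, Γ (a, u) = Γ (a, u₀)) (hright : ∀ u ∈ U, Γ (b, u) = Γ (b, u₀))
    (henergy : ∀ t ∈ Set.Ioo a b, h (Γ (t, u₀)) (ξ₀ t) = E)
    (hvelocity : ∀ t ∈ Set.Ioo a b,
      HasDerivAt (fun s => Γ (s, u₀)) (gradient (h (Γ (t, u₀))) (ξ₀ t)) t)
    (hforce : ∀ t ∈ Set.Ioo a b,
      HasDerivAt ξ₀ (-gradient (fun x => h x (ξ₀ t)) (Γ (t, u₀))) t) :
    HasDerivAt (fun u => ∫ t in a..b,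
      ⟪finslerMomentum ξh lam (Γ (t, u), fderivWithin ℝ Γ (Set.Icc a b ×ˢ U) (t, u) (1, 0)),
        fderivWithin ℝ Γ (Set.Icc a b ×ˢ U) (t, u) (1, 0)⟫) 0 u₀ := by
  set S := Set.Icc a b ×ˢ U
  let W q := fderivWithin ℝ Γ S q (1, 0)
  let X q := finslerMomentum ξh lam (Γ q, W q)
  have hW : ContDiffOn ℝ 1 W S :=
    (hΓ.fderivWithin ((uniqueDiffOn_Icc hab).prod hU.uniqueDiffOn) le_rfl).clm_apply
      contDiffOn_const
  have hX : ContDiffOn ℝ 1 X S := fun q hq =>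
    ContDiffAt.comp_contDiffWithinAt (f := fun q => (Γ q, W q)) q
      (hh.contDiffAt_finslerMomentum one_ne_zero hlam (hdomain q hq) (hregular q hq))
      (((hΓ.of_le one_le_two).prodMk hW) q hq)
  have hX₀ : ∀ t ∈ Set.Ioo a b, X (t, u₀) = ξ₀ t := by
    intro t ht
    have hq : (t, u₀) ∈ S := ⟨Set.Ioo_subset_Icc_self ht, hu₀⟩
    have hWt : W (t, u₀) = gradient (h (Γ (t, u₀))) (ξ₀ t) :=
      (uniqueDiffOn_Icc hab t hq.1).eq_deriv _ (hasDerivWithinAt_slice_fst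
        (hΓ.differentiableOn two_ne_zero _ hq).hasFDerivWithinAt hu₀)
        (hvelocity t ht).hasDerivWithinAt
    simp only [X, hWt]
    exact hh.finslerMomentum_gradient_eq one_ne_zero (hlam _ (hdomain _ hq))
      (hWt ▸ hregular _ hq) (henergy t ht)
  refine hasDerivAt_integral_pullbackCanonicalForm_of_hamilton hab hU hu₀
    (hh.contDiff.differentiable (by simp)) hΓ hX
    (fun q hq => (hlam _ (hdomain q hq) _ (hregular q hq)).2) hleft hright
    (fun t ht => by rw [hX₀ t ht]; exact hvelocity t ht) fun t ht => ?_
  rw [hX₀ t ht]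
  refine (hforce t ht).congr_of_eventuallyEq ?_
  filter_upwards [Ioo_mem_nhds ht.1 ht.2] with s hs using hX₀ s hs

end FirstVariation

theorem stmt9_general {V : Type*} [NormedAddCommGroup V] [InnerProductSpace ℝ V] [CompleteSpace V]
    {h : V → V → ℝ} {ξh : V → V → V} (hh : IsHyperregular 1 h ξh) {E : ℝ} {lam ℓ : V → V → ℝ}
    (hlam : ∀ x, h x 0 < E → ∀ v, v ≠ 0 → 0 < lam x v ∧ h x (ξh x (lam x v • v)) = E)
    (hℓ : ∀ x v, v ≠ 0 → ℓ x v = ⟪ξh x (lam x v • v), v⟫)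
    {a b : ℝ} (hab : a < b) {γ₀ ξ₀ : ℝ → V}
    (hvelocity : ∀ t ∈ Set.Ioo a b, HasDerivAt γ₀ (gradient (h (γ₀ t)) (ξ₀ t)) t)
    (hforce : ∀ t ∈ Set.Ioo a b, HasDerivAt ξ₀ (-gradient (fun x => h x (ξ₀ t)) (γ₀ t)) t)
    (henergy : ∀ t ∈ Set.Ioo a b, h (γ₀ t) (ξ₀ t) = E) :
    ∀ δ : ℝ, 0 < δ → ∀ Γ : ℝ → ℝ → V,
      ContDiffOn ℝ 2 (fun p : ℝ × ℝ => Γ p.1 p.2) (Set.Icc a b ×ˢ Set.Ioo (-δ) δ) →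
      (∀ t ∈ Set.Icc a b, ∀ u ∈ Set.Ioo (-δ) δ, h (Γ t u) 0 < E) →
      (∀ t ∈ Set.Icc a b, Γ t 0 = γ₀ t) →
      (∀ u ∈ Set.Ioo (-δ) δ, Γ a u = γ₀ a ∧ Γ b u = γ₀ b) →
      (∀ t ∈ Set.Icc a b, ∀ u ∈ Set.Ioo (-δ) δ, deriv (fun s : ℝ => Γ s u) t ≠ 0) →
      HasDerivAt
        (fun u : ℝ => ∫ t in a..b, ℓ (Γ t u) (deriv (fun s : ℝ => Γ s u) t)) 0 0 := by
  intro δ hδ Γ hΓ hdomain hΓ₀ hends hregular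
  have h0 : (0 : ℝ) ∈ Set.Ioo (-δ) δ := ⟨neg_lt_zero.2 hδ, hδ⟩
  have hderiv {t u : ℝ} (ht : t ∈ Set.Icc a b) (hu : u ∈ Set.Ioo (-δ) δ) :=
    fderivWithin_apply_eq_deriv_slice_fst (hΓ.differentiableOn two_ne_zero (t, u) ⟨ht, hu⟩)
      (uniqueDiffOn_Icc hab t ht) hu (hregular t ht u hu)
  have hΓ₀' : Set.EqOn (Γ · 0) γ₀ (Set.Ioo a b) := fun t ht => hΓ₀ t (Set.Ioo_subset_Icc_self ht)
  have hlength := hh.hasDerivAt_integral_inner_finslerMomentum hlam hab isOpen_Ioo h0 hΓ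
    (ξ₀ := ξ₀) (fun q hq => hdomain q.1 hq.1 q.2 hq.2)
    (fun q hq => (hderiv hq.1 hq.2).trans_ne (hregular q.1 hq.1 q.2 hq.2))
    (fun u hu => (hends u hu).1.trans (hends 0 h0).1.symm)
    (fun u hu => (hends u hu).2.trans (hends 0 h0).2.symm)
    (fun t ht => by simpa only [hΓ₀' ht] using henergy t ht)
    (fun t ht => by
      simpa only [hΓ₀' ht] using (hvelocity t ht).congr_of_eventuallyEq
        (hΓ₀'.eventuallyEq_of_mem (Ioo_mem_nhds ht.1 ht.2)))
    (fun t ht => by simpa only [hΓ₀' ht] using hforce t ht)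
  refine hlength.congr_of_eventuallyEq ?_
  filter_upwards [isOpen_Ioo.mem_nhds h0] with u hu
  refine intervalIntegral.integral_congr fun t ht => ?_
  rw [Set.uIcc_of_le hab.le] at ht
  simp only [hderiv ht hu, hℓ _ _ (hregular t ht u hu), finslerMomentum]

/-- Theorem 1.4 (a) (generalized Jacobi/Maupertuis theorem): a base integral curve
`γ₀` of the Hamiltonian vector field of `h` with energy `E` is a geodesic of the
associated Finsler function `ℓ = ℓ_{h,E}`: the first variation of the length functional
vanishes at `γ₀` over all regular variations with fixed endpoints. -/
theorem stmt9 (d : ℕ) (h : Ed d → Ed d → ℝ)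
    (hsmooth : ContDiff ℝ (⊤ : ℕ∞) (fun p : Ed d × Ed d => h p.1 p.2))
    (hconv : ∀ x : Ed d, ∃ α : ℝ, 0 < α ∧ ∀ ξ v : Ed d,
      α * ‖v‖ ^ 2 ≤ iteratedFDeriv ℝ 2 (h x) ξ ![v, v])
    (heven : ∀ x ξ : Ed d, h x ξ = h x (-ξ))
    (hbdd : ∃ K : ℝ, ∀ x : Ed d, h x 0 ≤ K)
    (ξh : Ed d → Ed d → Ed d)
    (hξh1 : ∀ x v : Ed d, gradient (h x) (ξh x v) = v)
    (hξh2 : ∀ x ξ : Ed d, ξh x (gradient (h x) ξ) = ξ)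
    (E : ℝ)
    (lam : Ed d → Ed d → ℝ)
    (hlam : ∀ x : Ed d, h x 0 < E → ∀ v : Ed d, v ≠ 0 →
      0 < lam x v ∧ h x (ξh x (lam x v • v)) = E)
    (ℓ : Ed d → Ed d → ℝ)
    (hℓ : ∀ x v : Ed d, ℓ x v = if v = 0 then 0 else ⟪ξh x (lam x v • v), v⟫)
    (a b : ℝ) (hab : a < b)
    (γ₀ ξ₀ : ℝ → Ed d)
    (hγM : ∀ t ∈ Set.Icc a b, h (γ₀ t) 0 < E)
    (hham1 : ∀ t ∈ Set.Icc a b, HasDerivAt γ₀ (gradient (h (γ₀ t)) (ξ₀ t)) t)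
    (hham2 : ∀ t ∈ Set.Icc a b,
      HasDerivAt ξ₀ (-(gradient (fun x : Ed d => h x (ξ₀ t)) (γ₀ t))) t)
    (hE : ∀ t ∈ Set.Icc a b, h (γ₀ t) (ξ₀ t) = E) :
    ∀ δ : ℝ, 0 < δ → ∀ Γ : ℝ → ℝ → Ed d,
      ContDiffOn ℝ 2 (fun p : ℝ × ℝ => Γ p.1 p.2) (Set.Icc a b ×ˢ Set.Ioo (-δ) δ) →
      (∀ t ∈ Set.Icc a b, ∀ u ∈ Set.Ioo (-δ) δ, h (Γ t u) 0 < E) →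
      (∀ t ∈ Set.Icc a b, Γ t 0 = γ₀ t) →
      (∀ u ∈ Set.Ioo (-δ) δ, Γ a u = γ₀ a ∧ Γ b u = γ₀ b) →
      (∀ t ∈ Set.Icc a b, ∀ u ∈ Set.Ioo (-δ) δ, deriv (fun s : ℝ => Γ s u) t ≠ 0) →
      HasDerivAt
        (fun u : ℝ => ∫ t in a..b, ℓ (Γ t u) (deriv (fun s : ℝ => Γ s u) t)) 0 0 := by
  have hh : IsHyperregular 1 h ξh := .of_le_iteratedFDeriv
    (hsmooth.of_le (WithTop.coe_le_coe.2 (le_top : (1 + 1 : ℕ∞) ≤ ⊤)))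
    (fun x ξ => (hconv x).imp fun _ hα => ⟨hα.1, hα.2 ξ⟩) hξh2 hξh1
  exact stmt9_general hh hlam (fun x v hv => by rw [hℓ, if_neg hv]) hab
    (fun t ht => hham1 t ⟨ht.1.le, ht.2.le⟩) (fun t ht => hham2 t ⟨ht.1.le, ht.2.le⟩)
    fun t ht => hE t ⟨ht.1.le, ht.2.le⟩
end
end

section
/- Let h ∈ C^∞(ℝ^d × ℝ^d, ℝ) be hyperconvex and even in each fibre with h(·,0) bounded from above, E ∈ ℝ, M̃ := {x : h(x,0) < E}, ξ_h(x,·) := (∇_ξ h(x,·))^{-1}, ℓ(x,v) := ξ_h(x, λ(x,v)v)·v the Finsler function at energy E (λ(x,v) > 0 the unique number with h(x, ξ_h(x, λ(x,v)v)) = E), and A_h(x,v) := ξ_h(x,v)·v the action. Let η ∈ C²([a,b], M̃) with η̇(t) ≠ 0 for all t, and let λ̂ : [a,b] → (0,∞) be the C¹ function with h(η(t), ξ_h(η(t), λ̂(t) η̇(t))) = E. Define α(t) := ∫_a^t λ̂(s)^{−1} ds and γ := η ∘ α^{−1} : [0, α(b)] → M̃. Then ∫_a^b ℓ(η(t), η̇(t))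 dt = ∫_0^{α(b)} A_h(γ(s), γ′(s)) ds. -/
open scoped RealInnerProductSpace Classical
noncomputable section

/-!
Since `ξ` inverts the fibre gradient, two positive scales of the same velocity on one energy level
are two points of a level set of the strictly convex function `h x` whose gradients lie on a common
ray. The strict gradient inequality, applied in both directions, makes the points equal; hence
`λ(η, η̇) = λ̂`. Substituting `s = α(t)` and using `γ'(α(t)) = λ̂(t) η̇(t)` turns the action
integral into that of `λ̂⁻¹ ξ(η, λ̂ η̇) · (λ̂ η̇) = ξ(η, λ̂ η̇) · η̇`, the Finsler integrand.
-/

section StrictConvexity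

open Set

theorem strictConvexOn_iff_forall_line {E : Type*} [AddCommGroup E] [Module ℝ E] {s : Set E}
    {f : E → ℝ} :
    StrictConvexOn ℝ s f ↔ ∀ x v : E, v ≠ 0 →
      StrictConvexOn ℝ ((fun t : ℝ => x + t • v) ⁻¹' s) (fun t : ℝ => f (x + t • v)) := by
  have line_combo (x v : E) {t u p q : ℝ} (hpq : p + q = 1) :
      x + (p • t + q • u) • v = p • (x + t • v) + q • (x + u • v) := by
    obtain rfl : p = 1 - q := eq_sub_of_add_eq hpq
    module
  have segment_combo (x y : E) {p q : ℝ} (hpq : p + q = 1) :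
      x + (p • (0 : ℝ) + q • (1 : ℝ)) • (y - x) = p • x + q • y := by
    simpa only [zero_smul, one_smul, add_zero, add_sub_cancel] using
      line_combo x (y - x) (t := 0) (u := 1) hpq
  constructor
  · intro hf x v hv
    refine ⟨fun t ht u hu p q hp hq hpq => ?_, fun t ht u hu htu p q hp hq hpq => ?_⟩
    · rw [mem_preimage, line_combo x v hpq]
      exact hf.1 ht hu hp hq hpq
    · have hne : x + t • v ≠ x + u • v := fun h =>
        htu (smul_left_injective ℝ hv (add_left_cancel h))
      simpa only [line_combo x v hpq] using hf.2 ht hu hne hp hq hpq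
  · intro hf
    have hline {x y : E} (hxy : x ≠ y) := hf x (y - x) (sub_ne_zero.mpr hxy.symm)
    have zero_mem {x y : E} (hx : x ∈ s) : (0 : ℝ) ∈ (fun t : ℝ => x + t • (y - x)) ⁻¹' s := by
      simpa using hx
    have one_mem {x y : E} (hy : y ∈ s) : (1 : ℝ) ∈ (fun t : ℝ => x + t • (y - x)) ⁻¹' s := by
      simpa using hy
    refine ⟨fun x hx y hy p q hp hq hpq => ?_, fun x hx y hy hxy p q hp hq hpq => ?_⟩
    · rcases eq_or_ne x y with rfl | hxy
      · rwa [Convex.combo_self hpq]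
      · simpa only [mem_preimage, segment_combo x y hpq] using
          (hline hxy).1 (zero_mem hx) (one_mem hy) hp hq hpq
    · simpa only [segment_combo x y hpq, zero_smul, one_smul, add_zero, add_sub_cancel] using
        (hline hxy).2 (zero_mem hx) (one_mem hy) zero_ne_one hp hq hpq

theorem iteratedDeriv_two_comp_add_smul {E F : Type*} [NormedAddCommGroup E] [NormedSpace ℝ E]
    [NormedAddCommGroup F] [NormedSpace ℝ F] {f : E → F} {x v : E} {t : ℝ}
    (hf : ContDiffAt ℝ 2 f (x + t • v)) :
    iteratedDeriv 2 (fun t : ℝ => f (x + t • v)) t =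
      iteratedFDeriv ℝ 2 f (x + t • v) ![v, v] := by
  have hline : deriv (fun t : ℝ => x + t • v) = fun _ => v := by
    ext1 t
    simpa using (((hasDerivAt_id t).smul_const v).const_add x).deriv
  have hline₂ : iteratedDeriv 2 (fun t : ℝ => x + t • v) t = 0 := by
    rw [iteratedDeriv_succ', hline, iteratedDeriv_one, deriv_const]
  have hvv : (fun _ : Fin 2 => v) = ![v, v] := by
    ext i
    fin_cases i <;> rfl
  have hsmooth : ContDiffAt ℝ 2 (fun t : ℝ => x + t • v) t := by fun_prop
  calc iteratedDeriv 2 (fun t : ℝ => f (x + t • v)) t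
      = iteratedFDeriv ℝ 2 f (x + t • v) (fun _ => deriv (fun t : ℝ => x + t • v) t) +
          fderiv ℝ f (x + t • v) (iteratedDeriv 2 (fun t : ℝ => x + t • v) t) :=
        iteratedDeriv_vcomp_two hf hsmooth
    _ = iteratedFDeriv ℝ 2 f (x + t • v) ![v, v] := by
        rw [hline₂, hline, map_zero, add_zero, hvv]

theorem strictConvexOn_univ_of_iteratedFDeriv_two_pos {E : Type*} [NormedAddCommGroup E]
    [NormedSpace ℝ E] {f : E → ℝ} (hf : ContDiff ℝ 2 f)
    (hpos : ∀ x v : E, v ≠ 0 → 0 < iteratedFDeriv ℝ 2 f x ![v, v]) :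
    StrictConvexOn ℝ univ f := by
  refine strictConvexOn_iff_forall_line.mpr fun x v hv => ?_
  rw [preimage_univ]
  refine strictConvexOn_univ_of_deriv2_pos (hf.continuous.comp (by fun_prop)) fun t => ?_
  rw [← iteratedDeriv_eq_iterate, iteratedDeriv_two_comp_add_smul hf.contDiffAt]
  exact hpos (x + t • v) v hv

theorem strictConvexOn_univ_of_exists_mul_norm_sq_le {E : Type*} [NormedAddCommGroup E]
    [NormedSpace ℝ E] {f : E → ℝ} (hf : ContDiff ℝ 2 f)
    (hcoercive : ∃ m : ℝ, 0 < m ∧ ∀ x v : E, m * ‖v‖ ^ 2 ≤ iteratedFDeriv ℝ 2 f x ![v, v]) :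
    StrictConvexOn ℝ univ f := by
  obtain ⟨m, hm, hle⟩ := hcoercive
  exact strictConvexOn_univ_of_iteratedFDeriv_two_pos hf fun x v hv =>
    (mul_pos hm (pow_pos (norm_pos_iff.mpr hv) 2)).trans_le (hle x v)

theorem add_lt_of_strictConvexOn_of_hasLineDerivAt {E : Type*} [AddCommGroup E] [Module ℝ E]
    {s : Set E} {f : E → ℝ} (hf : StrictConvexOn ℝ s f) {x y : E} (hx : x ∈ s) (hy : y ∈ s)
    (hxy : x ≠ y) {f' : ℝ} (hf' : HasLineDerivAt ℝ f f' x (y - x)) : f x + f' < f y := by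
  have hline := strictConvexOn_iff_forall_line.mp hf x (y - x) (sub_ne_zero.mpr hxy.symm)
  have hslope := hline.lt_slope_of_hasDerivAt (x := 0) (y := 1) (by simpa using hx)
    (by simpa using hy) zero_lt_one hf'
  simp only [slope_def_field, zero_smul, one_smul, add_zero, sub_zero, div_one,
    add_sub_cancel] at hslope
  linarith

end StrictConvexity

section EnergyScale

variable {F : Type*} [NormedAddCommGroup F] [InnerProductSpace ℝ F]

theorem add_inner_lt_of_strictConvexOn_of_hasGradientAt [CompleteSpace F] {s : Set F} {f : F → ℝ}
    (hf : StrictConvexOn ℝ s f) {x y g : F} (hx : x ∈ s) (hy : y ∈ s) (hxy : x ≠ y)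
    (hg : HasGradientAt f g x) : f x + ⟪g, y - x⟫ < f y :=
  add_lt_of_strictConvexOn_of_hasLineDerivAt hf hx hy hxy
    (hg.hasFDerivAt.hasLineDerivAt (y - x))

theorem eq_of_strictConvexOn_of_hasGradientAt_smul [CompleteSpace F] {s : Set F} {f : F → ℝ}
    (hf : StrictConvexOn ℝ s f) {x y v : F} (hx : x ∈ s) (hy : y ∈ s) (hxy : f x = f y) {p q : ℝ}
    (hp : 0 ≤ p) (hq : 0 ≤ q) (hgx : HasGradientAt f (p • v) x)
    (hgy : HasGradientAt f (q • v) y) : x = y := by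
  by_contra hne
  have hneg : p * ⟪v, y - x⟫ < 0 := by
    have hlt := add_inner_lt_of_strictConvexOn_of_hasGradientAt hf hx hy hne hgx
    rw [real_inner_smul_left] at hlt
    linarith
  have hpos : 0 < q * ⟪v, y - x⟫ := by
    have hlt := add_inner_lt_of_strictConvexOn_of_hasGradientAt hf hy hx (Ne.symm hne) hgy
    rw [real_inner_smul_left, ← neg_sub y x, inner_neg_right] at hlt
    linarith
  exact (neg_of_mul_neg_right hneg hp).not_gt (pos_of_mul_pos_right hpos hq)

/-- `c` is a fibre scale of the velocity `v` at energy `e`: it is positive and moves `v` onto the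
energy shell `{f ∘ ξ = e}`. Here `f` is the Hamiltonian on one fibre and `ξ` the inverse of its
gradient, so `f ∘ ξ` is the energy as a function of the velocity. -/
def IsEnergyScale (f : F → ℝ) (ξ : F → F) (e : ℝ) (v : F) (c : ℝ) : Prop :=
  0 < c ∧ f (ξ (c • v)) = e

theorem IsEnergyScale.unique [CompleteSpace F] {f : F → ℝ} {ξ : F → F} {e : ℝ} {v : F} {p q : ℝ}
    (hf : StrictConvexOn ℝ Set.univ f) (hξ : ∀ w, HasGradientAt f w (ξ w)) (hv : v ≠ 0)
    (hp : IsEnergyScale f ξ e v p) (hq : IsEnergyScale f ξ e v q) : p = q := by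
  have hξpq : ξ (p • v) = ξ (q • v) :=
    eq_of_strictConvexOn_of_hasGradientAt_smul hf (Set.mem_univ _) (Set.mem_univ _)
      (hp.2.trans hq.2.symm) hp.1.le hq.1.le (hξ _) (hξ _)
  have hpq : p • v = q • v := (hξ (p • v)).unique (hξpq ▸ hξ (q • v))
  exact smul_left_injective ℝ hv hpq

end EnergyScale

section TimeChange

open Set Filter Topology intervalIntegral

variable {F G : Type*} [NormedAddCommGroup F] [NormedSpace ℝ F]
  [NormedAddCommGroup G] [NormedSpace ℝ G]

theorem hasStrictDerivAt_primitive_of_continuousOn [CompleteSpace G] {f : ℝ → G} {a b t : ℝ}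
    (hf : ContinuousOn f (uIcc a b)) (ht : t ∈ uIoo a b) :
    HasStrictDerivAt (fun u => ∫ s in a..u, f s) (f t) t := by
  have hmeas : StronglyMeasurableAtFilter f (𝓝 t) :=
    (hf.mono uIoo_subset_uIcc_self).stronglyMeasurableAtFilter isOpen_Ioo t ht
  have hint : IntervalIntegrable f MeasureTheory.volume a t :=
    (hf.mono (uIcc_subset_uIcc_left (uIoo_subset_uIcc_self ht))).intervalIntegrable
  exact integral_hasStrictDerivAt_right hint hmeas (hf.continuousAt (Icc_mem_nhds ht.1 ht.2))

theorem integral_smul_comp_primitive {φ : ℝ → ℝ} {a b : ℝ} (hφ : ContinuousOn φ (uIcc a b))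
    (hφ0 : ∀ t ∈ uIoo a b, 0 ≤ φ t) (g : ℝ → G) :
    ∫ t in a..b, φ t • g (∫ s in a..t, φ s) = ∫ u in (0 : ℝ)..∫ s in a..b, φ s, g u := by
  simpa only [integral_same] using! integral_deriv_smul_comp_of_deriv_nonneg
    (continuousOn_primitive_interval hφ.integrableOn_uIcc)
    (fun t ht => (hasStrictDerivAt_primitive_of_continuousOn hφ ht).hasDerivAt) hφ0

theorem hasDerivAt_comp_of_eventually_leftInverse {α β : ℝ → ℝ} {η : ℝ → F} {c t : ℝ} {v : F}
    (hα : HasStrictDerivAt α c t) (hc : c ≠ 0) (hβ : ∀ᶠ u in 𝓝 t, β (α u) = u)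
    (hη : HasDerivAt η v t) : HasDerivAt (fun s => η (β s)) (c⁻¹ • v) (α t) := by
  have hβ' : HasDerivAt β c⁻¹ (α t) := (hα.to_local_left_inverse hc hβ).hasDerivAt
  exact HasDerivAt.scomp (α t) (hβ.self_of_nhds.symm ▸ hη) hβ'

theorem integral_lagrangian_timeChange (L : F → F → G) {a b : ℝ} {η η' : ℝ → F} {c α β : ℝ → ℝ}
    (hη : ∀ t ∈ uIoo a b, HasDerivAt η (η' t) t) (hc : ContinuousOn c (uIcc a b))
    (hc0 : ∀ t ∈ uIcc a b, 0 < c t) (hα : ∀ t, α t = ∫ s in a..t, (c s)⁻¹)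
    (hβ : LeftInvOn β α (uIoo a b)) :
    ∫ s in (0 : ℝ)..α b, L (η (β s)) (deriv (fun u => η (β u)) s) =
      ∫ t in a..b, (c t)⁻¹ • L (η t) (c t • η' t) := by
  obtain rfl : α = fun t => ∫ s in a..t, (c s)⁻¹ := funext hα
  have hcinv : ContinuousOn (fun t => (c t)⁻¹) (uIcc a b) := hc.inv₀ fun t ht => (hc0 t ht).ne'
  rw [← integral_smul_comp_primitive hcinv fun t ht =>
    (inv_pos.mpr (hc0 t (uIoo_subset_uIcc_self ht))).le]
  refine integral_congr_uIoo fun t ht => ?_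
  have hct : (c t)⁻¹ ≠ 0 := inv_ne_zero (hc0 t (uIoo_subset_uIcc_self ht)).ne'
  have hvel := hasDerivAt_comp_of_eventually_leftInverse
    (hasStrictDerivAt_primitive_of_continuousOn hcinv ht) hct
    (mem_of_superset (isOpen_Ioo.mem_nhds ht) hβ) (hη t ht)
  have hpos : β (∫ s in a..t, (c s)⁻¹) = t := hβ ht
  simp only [hvel.deriv, hpos, inv_inv]

end TimeChange

theorem stmt10_general {F : Type*} [NormedAddCommGroup F] [InnerProductSpace ℝ F]
    [CompleteSpace F] {h : F → F → ℝ} {ξ : F → F → F} {E : ℝ} {M : Set F} {lam ℓ : F → F → ℝ}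
    (hconv : ∀ x ∈ M, StrictConvexOn ℝ Set.univ (h x))
    (hξ : ∀ x ∈ M, ∀ v, HasGradientAt (h x) v (ξ x v))
    (hlam : ∀ x ∈ M, ∀ v, v ≠ 0 → IsEnergyScale (h x) (ξ x) E v (lam x v))
    (hℓ : ∀ x ∈ M, ∀ v, v ≠ 0 → ℓ x v = ⟪ξ x (lam x v • v), v⟫)
    {a b : ℝ} {η η' : ℝ → F} (hη : ∀ t ∈ Set.uIoo a b, HasDerivAt η (η' t) t)
    (hη0 : ∀ t ∈ Set.uIoo a b, η' t ≠ 0) (hηM : ∀ t ∈ Set.uIoo a b, η t ∈ M)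
    {lamh : ℝ → ℝ} (hlamh : ContinuousOn lamh (Set.uIcc a b))
    (hlamhpos : ∀ t ∈ Set.uIcc a b, 0 < lamh t)
    (hlamhE : ∀ t ∈ Set.uIoo a b, h (η t) (ξ (η t) (lamh t • η' t)) = E)
    {α β : ℝ → ℝ} (hα : ∀ t, α t = ∫ s in a..t, (lamh s)⁻¹)
    (hβ : Set.LeftInvOn β α (Set.uIoo a b)) :
    ∫ t in a..b, ℓ (η t) (η' t) =
      ∫ s in (0 : ℝ)..α b, ⟪ξ (η (β s)) (deriv (fun u => η (β u)) s),
        deriv (fun u => η (β u)) s⟫ := by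
  rw [integral_lagrangian_timeChange (fun x v => ⟪ξ x v, v⟫) hη hlamh hlamhpos hα hβ]
  refine intervalIntegral.integral_congr_uIoo fun t ht => ?_
  have hpos : 0 < lamh t := hlamhpos t (Set.uIoo_subset_uIcc_self ht)
  have hscale : lam (η t) (η' t) = lamh t :=
    (hlam _ (hηM t ht) _ (hη0 t ht)).unique (hconv _ (hηM t ht)) (hξ _ (hηM t ht)) (hη0 t ht)
      ⟨hpos, hlamhE t ht⟩
  calc ℓ (η t) (η' t) = ⟪ξ (η t) (lamh t • η' t), η' t⟫ := by
        rw [hℓ _ (hηM t ht) _ (hη0 t ht), hscale]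
    _ = (lamh t)⁻¹ • ⟪ξ (η t) (lamh t • η' t), lamh t • η' t⟫ := by
        rw [real_inner_smul_right, smul_eq_mul, inv_mul_cancel_left₀ hpos.ne']

/-- The Maupertuis-principle identity from the proof of Theorem 1.4: the Finsler length
of a regular curve `η` equals the action integral of its reparametrization
`γ = η ∘ α⁻¹` onto the energy shell, where `α(t) = ∫_a^t λ̂(s)⁻¹ ds` and `λ̂(t)` is the
fibre scaling putting `(η, λ̂ η̇)` on the energy shell `{E_h = E}`. -/
theorem stmt10 (d : ℕ) (h : Ed d → Ed d → ℝ)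
    (hsmooth : ContDiff ℝ (⊤ : ℕ∞) (fun p : Ed d × Ed d => h p.1 p.2))
    (hconv : ∀ x : Ed d, ∃ α : ℝ, 0 < α ∧ ∀ ξ v : Ed d,
      α * ‖v‖ ^ 2 ≤ iteratedFDeriv ℝ 2 (h x) ξ ![v, v])
    (heven : ∀ x ξ : Ed d, h x ξ = h x (-ξ))
    (hbdd : ∃ K : ℝ, ∀ x : Ed d, h x 0 ≤ K)
    (ξh : Ed d → Ed d → Ed d)
    (hξh1 : ∀ x v : Ed d, gradient (h x) (ξh x v) = v)
    (hξh2 : ∀ x ξ : Ed d, ξh x (gradient (h x) ξ) = ξ)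
    (E : ℝ)
    (lam : Ed d → Ed d → ℝ)
    (hlam : ∀ x : Ed d, h x 0 < E → ∀ v : Ed d, v ≠ 0 →
      0 < lam x v ∧ h x (ξh x (lam x v • v)) = E)
    (ℓ : Ed d → Ed d → ℝ)
    (hℓ : ∀ x v : Ed d, ℓ x v = if v = 0 then 0 else ⟪ξh x (lam x v • v), v⟫)
    (a b : ℝ) (hab : a ≤ b)
    (η : ℝ → Ed d) (η' : ℝ → Ed d)
    (hηC2 : ContDiffOn ℝ 2 η (Set.Icc a b))
    (hη : ∀ t ∈ Set.Icc a b, HasDerivAt η (η' t) t)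
    (hη0 : ∀ t ∈ Set.Icc a b, η' t ≠ 0)
    (hηM : ∀ t ∈ Set.Icc a b, h (η t) 0 < E)
    (lamh : ℝ → ℝ)
    (hlamhC1 : ContDiffOn ℝ 1 lamh (Set.Icc a b))
    (hlamhpos : ∀ t ∈ Set.Icc a b, 0 < lamh t)
    (hlamhE : ∀ t ∈ Set.Icc a b, h (η t) (ξh (η t) (lamh t • η' t)) = E)
    (α : ℝ → ℝ) (hα : ∀ t : ℝ, α t = ∫ s in a..t, (lamh s)⁻¹)
    (β : ℝ → ℝ)
    (hβ1 : ∀ t ∈ Set.Icc a b, β (α t) = t)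
    (hβ2 : ∀ s ∈ Set.Icc 0 (α b), α (β s) = s) :
    ∫ t in a..b, ℓ (η t) (η' t)
      = ∫ s in (0:ℝ)..(α b),
          ⟪ξh (η (β s)) (deriv (fun s' : ℝ => η (β s')) s),
            deriv (fun s' : ℝ => η (β s')) s⟫ := by
  have hfib (x : Ed d) : ContDiff ℝ 2 (h x) :=
    (contDiff_infty.mp hsmooth 2).comp (contDiff_const.prodMk contDiff_id)
  have hgrad (x v : Ed d) : HasGradientAt (h x) v (ξh x v) := by
    simpa only [hξh1 x v] using ((hfib x).differentiable two_ne_zero (ξh x v)).hasGradientAt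
  have hIoo : Set.uIoo a b ⊆ Set.Icc a b := Set.uIoo_of_le hab ▸ Set.Ioo_subset_Icc_self
  have hIcc : Set.uIcc a b = Set.Icc a b := Set.uIcc_of_le hab
  exact stmt10_general (M := {x | h x 0 < E})
    (fun x _ => strictConvexOn_univ_of_exists_mul_norm_sq_le (hfib x) (hconv x))
    (fun x _ => hgrad x) hlam (fun x _ v hv => (hℓ x v).trans (if_neg hv))
    (fun t ht => hη t (hIoo ht)) (fun t ht => hη0 t (hIoo ht)) (fun t ht => hηM t (hIoo ht))
    (hIcc ▸ hlamhC1.continuousOn) (hIcc ▸ hlamhpos) (fun t ht => hlamhE t (hIoo ht)) hα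
    fun t ht => hβ1 t (hIoo ht)
end
end
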